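/- arXiv:2412.13573 — 11 statements merged into one kernel-verified Lean document; each statement's English description precedes it below -/
import Mathlib

section
/- Fix a probability measure 𝒟 on Z, a probability measure π on Θ (the prior), an integer n ≥ 2, and a real δ ∈ (0,1]. Then the 𝒟^{⊗n}-probability of the following event over S = (z_1,…,z_n) is at least 1 − δ: for every probability measure ρ on Θ (the posterior), ∫ L(θ,𝒟) dρ(θ) ≤ ∫ L̂(θ,S) dρ(θ) + √( (KL(ρ‖π) + log(n/δ)) / (2(n−1)) ), where the right-hand side is interpreted as +∞ if KL(ρ‖π) = +∞. -/
open MeasureTheory Real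
open scoped ENNReal

open Classical in
/-- Kullback–Leibler divergence between two measures: `∫ log (dμ/dν) dμ` when `μ ≪ ν`
(and the log-likelihood ratio is integrable), `+∞` otherwise. -/
noncomputable def klDiv {Ω : Type*} [MeasurableSpace Ω] (μ ν : Measure Ω) : ℝ≥0∞ :=
  if μ ≪ ν ∧ Integrable (llr μ ν) μ then ENNReal.ofReal (∫ x, llr μ ν x ∂μ) else ⊤

open ProbabilityTheory in
lemma tail_bound {Z : Type*} [MeasurableSpace Z] (𝒟 : Measure Z) [IsProbabilityMeasure 𝒟]
    (X : Z → ℝ) (hX : Measurable X) (hX01 : ∀ z, X z ∈ Set.Icc (0 : ℝ) 1) (n : ℕ) (hn : 2 ≤ n)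
    (x : ℝ) (hx : 0 ≤ x) :
    (Measure.pi fun _ : Fin n => 𝒟).real
      {S | x ≤ ∫ z, X z ∂𝒟 - (n : ℝ)⁻¹ * ∑ i, X (S i)} ≤ exp (-(2 * n * x ^ 2)) := by
  have hn0 : (0 : ℝ) < n := by positivity
  set P := Measure.pi fun _ : Fin n => 𝒟 with hP
  let Y : Fin n → (Fin n → Z) → ℝ := fun i S => -X (S i) - (-∫ z, X z ∂𝒟)
  have hint (i : Fin n) : ∫ S, -X (S i) ∂P = -∫ z, X z ∂𝒟 := by
    rw [integral_neg, integral_comp_eval (μ := fun _ : Fin n => 𝒟) hX.aestronglyMeasurable]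
  have hsub (i : Fin n) : HasSubgaussianMGF (Y i) (1 / 4) P := by
    have h := hasSubgaussianMGF_of_mem_Icc (μ := P) (X := fun S => -X (S i)) (a := -1) (b := 0)
      (Measurable.aemeasurable (by fun_prop)) (ae_of_all _ fun S => ⟨by linarith [(hX01 (S i)).2], by linarith [(hX01 (S i)).1]⟩)
    rw [hint i] at h
    convert h using 1
    ext; norm_num
  have hind : iIndepFun Y P :=
    iIndepFun_pi (X := fun (_ : Fin n) z => -X z - (-∫ z, X z ∂𝒟)) (fun i => by fun_prop)
  have h := HasSubgaussianMGF.measure_sum_ge_le_of_iIndepFun hind (s := Finset.univ)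
    (c := fun _ => 1 / 4) (fun i _ => hsub i) (ε := n * x) (by positivity)
  convert h using 2
  · ext S
    simp only [Set.mem_ofPred_eq, Y, Finset.sum_sub_distrib, Finset.sum_neg_distrib, Finset.sum_const,
      Finset.card_univ, Fintype.card_fin, nsmul_eq_mul]
    rw [← mul_le_mul_iff_right₀ hn0, mul_sub, mul_inv_cancel_left₀ hn0.ne']
    constructor <;> intro h <;> linarith
  · simp
    field_simp
    norm_num
    ring

lemma exp_moment {Z : Type*} [MeasurableSpace Z] (𝒟 : Measure Z) [IsProbabilityMeasure 𝒟]
    (X : Z → ℝ) (hX : Measurable X) (hX01 : ∀ z, X z ∈ Set.Icc (0 : ℝ) 1) (n : ℕ) (hn : 2 ≤ n) :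
    ∫⁻ S, ENNReal.ofReal (exp (2 * ((n : ℝ) - 1) *
      (max 0 (∫ z, X z ∂𝒟 - (n : ℝ)⁻¹ * ∑ i, X (S i))) ^ 2)) ∂(Measure.pi fun _ : Fin n => 𝒟)
      ≤ n := by
  have hn2 : (2 : ℝ) ≤ n := by exact_mod_cast hn
  have hn1 : (0 : ℝ) < n - 1 := by linarith
  rw [lintegral_eq_lintegral_meas_lt _ (ae_of_all _ fun S => (exp_pos _).le)
    (Measurable.aemeasurable (by fun_prop))]
  have key : ∀ t ∈ Set.Ioi (1 : ℝ), (Measure.pi fun _ : Fin n => 𝒟) {S | t < exp (2 * ((n : ℝ) - 1) *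
      (max 0 (∫ z, X z ∂𝒟 - (n : ℝ)⁻¹ * ∑ i, X (S i))) ^ 2)} ≤
      ENNReal.ofReal (t ^ (-(n / (n - 1)) : ℝ)) := by
    intro t (ht : 1 < t)
    have hl : 0 < log t := log_pos ht
    have h := tail_bound 𝒟 X hX hX01 n hn (√(log t / (2 * (n - 1)))) (by positivity)
    rw [sq_sqrt (by positivity)] at h
    rw [rpow_def_of_pos (by linarith)]
    have e : log t * (-(n / (n - 1)) : ℝ) = -(2 * n * (log t / (2 * (n - 1)))) := by
      field_simp
    rw [e]
    refine le_trans (measure_mono ?_) ((ENNReal.le_ofReal_iff_toReal_le (measure_ne_top _ _) (exp_pos _).le).2 h)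
    intro S hS
    simp only [Set.mem_ofPred_eq] at hS ⊢
    rw [← log_lt_iff_lt_exp (by linarith)] at hS
    set d := ∫ z, X z ∂𝒟 - (n : ℝ)⁻¹ * ∑ i, X (S i)
    rcases le_total d 0 with hd | hd
    · rw [max_eq_left hd] at hS
      norm_num at hS
      linarith
    · rw [max_eq_right hd] at hS
      refine sqrt_le_iff.2 ⟨hd, ?_⟩
      rw [div_le_iff₀ (by positivity)]
      linarith
  have hsplit : Set.Ioi (0 : ℝ) = Set.Ioc 0 1 ∪ Set.Ioi 1 := by
    rw [Set.Ioc_union_Ioi_eq_Ioi zero_le_one]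
  have ha : (-(n / (n - 1)) : ℝ) < -1 := by
    rw [neg_lt_neg_iff, lt_div_iff₀ hn1]; linarith
  rw [hsplit]
  refine (lintegral_union_le _ _ _).trans ?_
  have h1 : ∫⁻ t in Set.Ioc (0 : ℝ) 1, (Measure.pi fun _ : Fin n => 𝒟) {S | t < exp (2 * ((n : ℝ) - 1) *
      (max 0 (∫ z, X z ∂𝒟 - (n : ℝ)⁻¹ * ∑ i, X (S i))) ^ 2)} ≤ 1 := by
    refine (lintegral_mono fun t => prob_le_one).trans ?_
    simp
  have h2 := setLIntegral_mono' (μ := volume) measurableSet_Ioi key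
  rw [← ofReal_integral_eq_lintegral_ofReal (integrableOn_Ioi_rpow_of_lt ha one_pos)
    (by filter_upwards [ae_restrict_mem measurableSet_Ioi] with t ht
        exact rpow_nonneg (by linarith [Set.mem_Ioi.1 ht]) _),
    integral_Ioi_rpow_of_lt ha one_pos] at h2
  refine (add_le_add h1 h2).trans ?_
  rw [← ENNReal.ofReal_one, ← ENNReal.ofReal_add zero_le_one, ← ENNReal.ofReal_natCast]
  · apply ENNReal.ofReal_le_ofReal
    have : (-(n / (n - 1)) + 1 : ℝ) = - (1 / (n - 1)) := by field_simp; ring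
    rw [this]; simp
  · rw [one_rpow]
    exact div_nonneg_of_nonpos (by norm_num) (by linarith)

lemma donsker {Θ : Type*} [MeasurableSpace Θ] (ρ ν : Measure Θ) [IsProbabilityMeasure ρ]
    [IsProbabilityMeasure ν] (h : klDiv ρ ν ≠ ⊤) (f : Θ → ℝ) (hf : Measurable f) (C : ℝ)
    (hC : ∀ θ, f θ ∈ Set.Icc 0 C) :
    ∫ θ, f θ ∂ρ ≤ (klDiv ρ ν).toReal + log (∫ θ, exp (f θ) ∂ν) := by
  have hh : ρ ≪ ν ∧ Integrable (llr ρ ν) ρ := by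
    by_contra hc
    exact h (by rw [klDiv, if_neg hc])
  obtain ⟨hac, hll⟩ := hh
  have hkl : (klDiv ρ ν).toReal = max (∫ x, llr ρ ν x ∂ρ) 0 := by
    rw [klDiv, if_pos ⟨hac, hll⟩, ENNReal.toReal_ofReal']
  have hfρ : Integrable f ρ := Integrable.of_mem_Icc 0 C hf.aemeasurable (ae_of_all _ hC)
  have hfν : Integrable (fun x => exp (f x)) ν :=
    Integrable.of_mem_Icc 0 (exp C) (by fun_prop)
      (ae_of_all _ fun x => ⟨(exp_pos _).le, exp_le_exp.2 (hC x).2⟩)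
  have := isProbabilityMeasure_tilted hfν
  have h1 := InformationTheory.integral_llr_add_sub_measure_univ_nonneg
    (hac.trans (absolutelyContinuous_tilted hfν)) (integrable_llr_tilted_right hac hfρ hll hfν)
  rw [integral_llr_tilted_right hac hfρ hfν hll] at h1
  simp at h1
  rw [hkl]
  linarith [le_max_left (∫ x, llr ρ ν x ∂ρ) 0]

/-- **McAllester's PAC-Bayesian bound.** With probability at least `1 - δ` over an i.i.d.
sample `S` of size `n` from `𝒟`, simultaneously for all posteriors `ρ`, the `ρ`-average
population loss is bounded by the `ρ`-average empirical loss plus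
`√((KL(ρ‖prior) + log (n/δ)) / (2 (n-1)))` (the bound being read as `+∞` when `KL(ρ‖prior) = +∞`). -/
theorem statement1
    {Z Θ : Type*} [MeasurableSpace Z] [MeasurableSpace Θ]
    (ℓ : Θ × Z → ℝ) (hℓ : Measurable ℓ) (hℓ01 : ∀ x, ℓ x ∈ Set.Icc (0 : ℝ) 1)
    (𝒟 : Measure Z) [IsProbabilityMeasure 𝒟]
    (prior : Measure Θ) [IsProbabilityMeasure prior]
    (n : ℕ) (hn : 2 ≤ n) (δ : ℝ) (hδ : δ ∈ Set.Ioc (0 : ℝ) 1) :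
    ENNReal.ofReal (1 - δ) ≤
      (Measure.pi fun _ : Fin n => 𝒟)
        {S : Fin n → Z |
          ∀ ρ : Measure Θ, IsProbabilityMeasure ρ → klDiv ρ prior ≠ ⊤ →
            ∫ θ, (∫ z, ℓ (θ, z) ∂𝒟) ∂ρ ≤
              (∫ θ, ((n : ℝ)⁻¹ * ∑ i, ℓ (θ, S i)) ∂ρ) +
                Real.sqrt (((klDiv ρ prior).toReal + Real.log (n / δ)) / (2 * ((n : ℝ) - 1)))} := by
  have hn2 : (2 : ℝ) ≤ n := by exact_mod_cast hn
  have hn1 : (0 : ℝ) < n - 1 := by linarith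
  have hn0 : (0 : ℝ) < n := by linarith
  obtain ⟨hδ0, hδ1⟩ := hδ
  set P := Measure.pi fun _ : Fin n => 𝒟 with hP
  set L : Θ → ℝ := fun θ => ∫ z, ℓ (θ, z) ∂𝒟 with hLdef
  have hL : Measurable L := (hℓ.stronglyMeasurable.integral_prod_right').measurable
  have hL01 : ∀ θ, L θ ∈ Set.Icc (0 : ℝ) 1 := by
    intro θ
    refine ⟨integral_nonneg fun z => (hℓ01 _).1, ?_⟩
    have h := integral_mono (μ := 𝒟) (f := fun z => ℓ (θ, z)) (g := fun _ => (1 : ℝ))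
      (Integrable.of_mem_Icc 0 1 (Measurable.aemeasurable (by fun_prop)) (ae_of_all _ fun z => hℓ01 _))
      (integrable_const _) (fun z => (hℓ01 _).2)
    simpa using h
  set E : (Fin n → Z) → Θ → ℝ := fun S θ => (n : ℝ)⁻¹ * ∑ i, ℓ (θ, S i) with hEdef
  have hE : Measurable (Function.uncurry E) := by
    simp only [hEdef, Function.uncurry_def]
    fun_prop
  have hE01 : ∀ S θ, E S θ ∈ Set.Icc (0 : ℝ) 1 := by
    intro S θ
    refine ⟨mul_nonneg (by positivity) (Finset.sum_nonneg fun i _ => (hℓ01 _).1), ?_⟩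
    have : ∑ i, ℓ (θ, S i) ≤ n := by
      refine (Finset.sum_le_sum fun i _ => (hℓ01 (θ, S i)).2).trans ?_
      simp
    simp only [hEdef]
    rw [inv_mul_le_iff₀ hn0]; linarith
  set g : (Fin n → Z) → Θ → ℝ := fun S θ => max 0 (L θ - E S θ) with hgdef
  have hg : Measurable (Function.uncurry g) := by
    have : Measurable fun p : (Fin n → Z) × Θ => E p.1 p.2 := hE
    simp only [hgdef, Function.uncurry_def]
    fun_prop
  have hg01 : ∀ S θ, g S θ ∈ Set.Icc (0 : ℝ) 1 := fun S θ =>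
    ⟨le_max_left _ _, max_le zero_le_one (by linarith [(hL01 θ).2, (hE01 S θ).1])⟩
  set G : (Fin n → Z) → Θ → ℝ≥0∞ :=
    fun S θ => ENNReal.ofReal (exp (2 * ((n : ℝ) - 1) * g S θ ^ 2)) with hGdef
  have hG : Measurable (Function.uncurry G) := by
    have : Measurable fun p : (Fin n → Z) × Θ => g p.1 p.2 := hg
    simp only [hGdef, Function.uncurry_def]
    fun_prop
  have hFm : Measurable fun S => ∫⁻ θ, G S θ ∂prior := hG.lintegral_prod_right'
  have hF : ∫⁻ S, ∫⁻ θ, G S θ ∂prior ∂P ≤ n := by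
    rw [lintegral_lintegral_swap hG.aemeasurable]
    refine (lintegral_mono (g := fun _ => (n : ℝ≥0∞)) fun θ => ?_).trans (by simp)
    exact exp_moment 𝒟 (fun z => ℓ (θ, z)) (by fun_prop) (fun z => hℓ01 _) n hn
  have hbad : P {S | ENNReal.ofReal (n / δ) ≤ ∫⁻ θ, G S θ ∂prior} ≤ ENNReal.ofReal δ := by
    have hpos : 0 < (n : ℝ) / δ := by positivity
    refine (meas_ge_le_lintegral_div hFm.aemeasurable (by simpa using hpos)
      ENNReal.ofReal_ne_top).trans ?_
    refine (ENNReal.div_le_div_right hF _).trans ?_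
    rw [← ENNReal.ofReal_natCast, ← ENNReal.ofReal_div_of_pos hpos]
    apply ENNReal.ofReal_le_ofReal
    rw [div_div_cancel₀ hn0.ne']
  have hbm : MeasurableSet {S | ENNReal.ofReal (n / δ) ≤ ∫⁻ θ, G S θ ∂prior} :=
    measurableSet_le measurable_const hFm
  have hgood : ENNReal.ofReal (1 - δ) ≤ P {S | ENNReal.ofReal (n / δ) ≤ ∫⁻ θ, G S θ ∂prior}ᶜ := by
    rw [prob_compl_eq_one_sub hbm, ENNReal.ofReal_sub _ hδ0.le, ENNReal.ofReal_one]
    exact tsub_le_tsub_left hbad _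
  refine hgood.trans (measure_mono ?_)
  intro S hS ρ hρ hkl
  have hS' : ∫⁻ θ, G S θ ∂prior < ENNReal.ofReal (n / δ) := by simpa using hS
  have hgS : Measurable (g S) := hg.comp measurable_prodMk_left
  have hES : Measurable (E S) := hE.comp measurable_prodMk_left
  have hf0 : Measurable fun θ => 2 * ((n : ℝ) - 1) * g S θ ^ 2 := by fun_prop
  have hfb : ∀ θ, 2 * ((n : ℝ) - 1) * g S θ ^ 2 ∈ Set.Icc (0 : ℝ) (2 * ((n : ℝ) - 1)) := by
    intro θ
    have h1 := hg01 S θ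
    refine ⟨by positivity, ?_⟩
    have : g S θ ^ 2 ≤ 1 := pow_le_one₀ h1.1 h1.2
    nlinarith
  have hdv := donsker ρ prior hkl _ hf0 _ hfb
  have hexpint : Integrable (fun θ => exp (2 * ((n : ℝ) - 1) * g S θ ^ 2)) prior :=
    Integrable.of_mem_Icc 0 (exp (2 * ((n : ℝ) - 1))) (Measurable.aemeasurable (by fun_prop))
      (ae_of_all _ fun x => ⟨(exp_pos _).le, exp_le_exp.2 (hfb x).2⟩)
  have hexp : ∫ θ, exp (2 * ((n : ℝ) - 1) * g S θ ^ 2) ∂prior ≤ n / δ := by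
    have h := hS'.le
    simp only [hGdef] at h
    rw [← ofReal_integral_eq_lintegral_ofReal hexpint (ae_of_all _ fun θ => (exp_pos _).le)] at h
    exact (ENNReal.ofReal_le_ofReal_iff (by positivity)).1 h
  have hlog := log_le_log (integral_exp_pos hexpint) hexp
  rw [integral_const_mul] at hdv
  have hgi : Integrable (g S) ρ :=
    Integrable.of_mem_Icc 0 1 hgS.aemeasurable (ae_of_all _ (hg01 S))
  have hg2i : Integrable (fun θ => g S θ ^ 2) ρ :=
    Integrable.of_mem_Icc 0 1 (hgS.pow_const 2).aemeasurable
      (ae_of_all _ fun θ => ⟨sq_nonneg _, pow_le_one₀ (hg01 S θ).1 (hg01 S θ).2⟩)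
  have hLi : Integrable L ρ := Integrable.of_mem_Icc 0 1 hL.aemeasurable (ae_of_all _ hL01)
  have hEi : Integrable (E S) ρ := Integrable.of_mem_Icc 0 1 hES.aemeasurable (ae_of_all _ (hE01 S))
  have hjen : (∫ θ, g S θ ∂ρ) ^ 2 ≤ ∫ θ, g S θ ^ 2 ∂ρ := by
    set m := ∫ θ, g S θ ∂ρ with hm
    have h : 2 * m * m - m ^ 2 ≤ ∫ θ, g S θ ^ 2 ∂ρ := by
      have h1 := integral_mono (μ := ρ) (f := fun θ => 2 * m * g S θ - m ^ 2)
        ((hgi.const_mul _).sub (integrable_const _)) hg2i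
        (fun θ => by dsimp only; nlinarith [sq_nonneg (g S θ - m)])
      rw [integral_sub (hgi.const_mul _) (integrable_const _), integral_const_mul, ← hm] at h1
      simpa using h1
    nlinarith
  have hle : ∫ θ, L θ ∂ρ - ∫ θ, E S θ ∂ρ ≤ ∫ θ, g S θ ∂ρ := by
    rw [← integral_sub hLi hEi]
    exact integral_mono (hLi.sub hEi) hgi fun θ => le_max_right _ _
  have hfin : ∫ θ, g S θ ∂ρ ≤
      √(((klDiv ρ prior).toReal + log (n / δ)) / (2 * ((n : ℝ) - 1))) := by
    apply le_sqrt_of_sq_le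
    rw [le_div_iff₀ (by positivity)]
    nlinarith
  linarith
end

section
/- The problem (P) admits a unique minimizer q* over C₁, and every coordinate of q* is strictly positive: q*_i > 0 for all i ∈ {1, …, N}. -/
/-- The feasible set `C₁`: probability vectors `q` with `q 0 ≥ α * q k` for all `k ≠ 0`.
(Index `0` plays the role of the index `1` of the paper.) -/
def C1 (N : ℕ) [NeZero N] (α : ℝ) : Set (Fin N → ℝ) :=
  {q | (∀ i, 0 ≤ q i) ∧ (∑ i, q i = 1) ∧ ∀ k, k ≠ 0 → α * q k ≤ q 0}

/-- `KL(q‖p) = ∑ i, q i * log (q i / p i)`, with the convention `0 * log 0 = 0`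
(automatic here since `Real.log 0 = 0`). -/
noncomputable def KLv {N : ℕ} (q p : Fin N → ℝ) : ℝ :=
  ∑ i, q i * Real.log (q i / p i)

theorem klterm_eq (c : ℝ) (hc : 0 < c) (x : ℝ) :
    x * Real.log (x / c) = x * Real.log x - x * Real.log c := by
  rcases eq_or_ne x 0 with h | h
  · simp [h]
  · rw [Real.log_div h hc.ne']; ring

theorem klterm_strict (c : ℝ) (hc : 0 < c) :
    StrictConvexOn ℝ (Set.Ici 0) (fun x : ℝ => x * Real.log (x / c)) := by
  refine ⟨convex_Ici 0, ?_⟩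
  intro x hx y hy hxy a b ha hb hab
  have h := Real.strictConvexOn_mul_log.2 hx hy hxy ha hb hab
  simp only [klterm_eq c hc, smul_eq_mul] at h ⊢
  linarith

theorem C1_convex (N : ℕ) [NeZero N] (α : ℝ) : Convex ℝ (C1 N α) := by
  rintro x ⟨hx0, hx1, hx2⟩ y ⟨hy0, hy1, hy2⟩ a b ha hb hab
  refine ⟨fun i => ?_, ?_, fun k hk => ?_⟩
  · have := mul_nonneg ha (hx0 i)
    have := mul_nonneg hb (hy0 i)
    simp only [Pi.add_apply, Pi.smul_apply, smul_eq_mul]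
    linarith
  · simp only [Pi.add_apply, Pi.smul_apply, smul_eq_mul]
    rw [Finset.sum_add_distrib, ← Finset.mul_sum, ← Finset.mul_sum, hx1, hy1]
    linarith
  · have := mul_le_mul_of_nonneg_left (hx2 k hk) ha
    have := mul_le_mul_of_nonneg_left (hy2 k hk) hb
    simp only [Pi.add_apply, Pi.smul_apply, smul_eq_mul]
    linarith

theorem C1_compact (N : ℕ) [NeZero N] (α : ℝ) : IsCompact (C1 N α) := by
  have hc : IsClosed (C1 N α) := by
    have : C1 N α = (⋂ i, {q : Fin N → ℝ | 0 ≤ q i}) ∩ ({q | ∑ i, q i = 1} ∩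
        ⋂ k, ⋂ (_ : k ≠ 0), {q : Fin N → ℝ | α * q k ≤ q 0}) := by
      ext q; simp [C1]
    rw [this]
    refine (isClosed_iInter fun i => isClosed_le (by fun_prop) (by fun_prop)).inter
      ((isClosed_eq (by fun_prop) (by fun_prop)).inter
        (isClosed_iInter fun k => isClosed_iInter fun _ =>
          isClosed_le (by fun_prop) (by fun_prop)))
  refine (isCompact_Icc (a := (0 : Fin N → ℝ)) (b := 1)).of_isClosed_subset hc ?_
  rintro q ⟨h0, h1, -⟩
  refine ⟨h0, fun i => ?_⟩
  have := Finset.single_le_sum (fun j _ => h0 j) (Finset.mem_univ i)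
  rw [h1] at this
  exact this

theorem C1_pos_point (N : ℕ) [NeZero N] (α : ℝ) (hα : 1 ≤ α) :
    ∃ u ∈ C1 N α, ∀ i, 0 < u i := by
  let w : Fin N → ℝ := fun i => if i = 0 then α else 1
  have hw : ∀ i, 0 < w i := by
    intro i; dsimp only [w]; split_ifs <;> linarith
  have hS : 0 < ∑ i, w i := Finset.sum_pos (fun i _ => hw i) ⟨0, Finset.mem_univ _⟩
  refine ⟨fun i => w i / ∑ i, w i, ⟨fun i => (div_pos (hw i) hS).le, ?_, fun k hk => ?_⟩,
    fun i => div_pos (hw i) hS⟩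
  · rw [← Finset.sum_div, div_self hS.ne']
  · have h1 : w k = 1 := by simp [w, hk]
    have h2 : w 0 = α := by simp [w]
    simp only [h1, h2]
    rw [mul_one_div]

theorem KLv_continuous {N : ℕ} (p : Fin N → ℝ) (hp : ∀ i, 0 < p i) :
    Continuous (fun q : Fin N → ℝ => KLv q p) := by
  unfold KLv
  refine continuous_finsetSum _ fun i _ => ?_
  simp only [klterm_eq _ (hp i)]
  have := Real.continuous_mul_log.comp (continuous_apply (A := fun _ : Fin N => ℝ) i)
  exact this.sub (by fun_prop)

/-- Problem (P) admits a unique minimizer over `C₁`, and all of its coordinates are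
strictly positive. -/
theorem statement3 (N : ℕ) [NeZero N] (hN : 2 ≤ N) (α : ℝ) (hα : 1 ≤ α)
    (p : Fin N → ℝ) (hp : ∀ i, 0 < p i) (hps : ∑ i, p i = 1) :
    ∃ q : Fin N → ℝ,
      (q ∈ C1 N α ∧ ∀ r ∈ C1 N α, KLv q p ≤ KLv r p) ∧
      (∀ i, 0 < q i) ∧
      (∀ r, r ∈ C1 N α → (∀ s ∈ C1 N α, KLv r p ≤ KLv s p) → r = q) := by
  obtain ⟨u, hu, hupos⟩ := C1_pos_point N α hα
  obtain ⟨q, hq, hmin⟩ := (C1_compact N α).exists_isMinOn ⟨u, hu⟩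
    (KLv_continuous p hp).continuousOn
  have hmin' : ∀ r ∈ C1 N α, KLv q p ≤ KLv r p := fun r hr => hmin hr
  refine ⟨q, ⟨hq, hmin'⟩, ?_, ?_⟩
  · intro j
    by_contra hj
    have hqj : q j = 0 := le_antisymm (not_lt.mp hj) (hq.1 j)
    have hD := hmin' u hu
    set D := KLv u p - KLv q p with hDdef
    have hD0 : 0 ≤ D := by linarith
    set t := Real.exp (-(D + 1) / u j) with ht
    have ht0 : 0 < t := Real.exp_pos _
    have ht1 : t ≤ 1 := by
      rw [ht, Real.exp_le_one_iff]
      exact div_nonpos_of_nonpos_of_nonneg (by linarith) (hupos j).le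
    have hlog : u j * Real.log t = -(D + 1) := by
      rw [ht, Real.log_exp]; field_simp [(hupos j).ne']
    have hm := hmin' _ (C1_convex N α hq hu (sub_nonneg.mpr ht1) ht0.le (by ring))
    have hle : KLv ((1 - t) • q + t • u) p ≤
        ∑ i, ((1 - t) * (q i * Real.log (q i / p i)) + t * (u i * Real.log (u i / p i))
          + if i = j then t * (u j * Real.log t) else 0) := by
      unfold KLv
      refine Finset.sum_le_sum fun i _ => ?_
      by_cases hij : i = j
      · subst hij
        simp only [Pi.add_apply, Pi.smul_apply, smul_eq_mul, hqj, if_true]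
        rw [mul_zero, zero_add, zero_mul, klterm_eq _ (hp i), klterm_eq _ (hp i),
          Real.log_mul ht0.ne' (hupos i).ne']
        apply le_of_eq; ring
      · have := (klterm_strict (p i) (hp i)).convexOn.2 (hq.1 i) (hu.1 i)
          (sub_nonneg.mpr ht1) ht0.le (by ring)
        simpa [hij] using this
    rw [Finset.sum_add_distrib, Finset.sum_add_distrib, ← Finset.mul_sum, ← Finset.mul_sum,
      Finset.sum_ite_eq' Finset.univ j, if_pos (Finset.mem_univ j), hlog] at hle
    change _ ≤ (1 - t) * KLv q p + t * KLv u p + _ at hle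
    have : KLv u p = D + KLv q p := by rw [hDdef]; ring
    rw [this] at hle
    nlinarith
  · intro r hr hrmin
    by_contra hne
    obtain ⟨j, hj⟩ := Function.ne_iff.mp hne
    have hm := hmin' _ (C1_convex N α hr hq (a := 1 / 2) (b := 1 / 2)
      (by norm_num) (by norm_num) (by norm_num))
    have hrq := hrmin q hq
    have hlt : KLv ((1 / 2 : ℝ) • r + (1 / 2 : ℝ) • q) p <
        ∑ i, ((1 / 2) * (r i * Real.log (r i / p i))
          + (1 / 2) * (q i * Real.log (q i / p i))) := by
      unfold KLv
      refine Finset.sum_lt_sum (fun i _ => ?_) ⟨j, Finset.mem_univ j, ?_⟩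
      · exact (klterm_strict (p i) (hp i)).convexOn.2 (hr.1 i) (hq.1 i)
          (by norm_num) (by norm_num) (by norm_num)
      · exact (klterm_strict (p j) (hp j)).2 (hr.1 j) (hq.1 j) hj
          (by norm_num) (by norm_num) (by norm_num)
    rw [Finset.sum_add_distrib, ← Finset.mul_sum, ← Finset.mul_sum] at hlt
    change _ < 1 / 2 * KLv r p + 1 / 2 * KLv q p at hlt
    linarith
end

section
/- Let q* be the unique minimizer of (P) (all of whose coordinates are strictly positive). Then there exist unique reals λ and μ_2, …, μ_N with μ_j ≥ 0 for all j, satisfying the stationarity conditions q*_1 = p_1·exp(∑_{k=2}^N μ_k − 1 − λ) and q*_j = p_j·exp(−α·μ_j − 1 − λ) for j = 2, …, N, together with the complementary slackness conditions μ_j·(α·q*_j − q*_1) = 0 for j = 2, …, N. -/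
open Filter Topology in
lemma dir_aux (N : ℕ) [NeZero N] (α : ℝ)
    (p : Fin N → ℝ) (hp : ∀ i, 0 < p i)
    (q : Fin N → ℝ) (hqC : q ∈ C1 N α)
    (hqmin : ∀ r ∈ C1 N α, KLv q p ≤ KLv r p)
    (hqpos : ∀ i, 0 < q i) (d : Fin N → ℝ) (hd : ∑ i, d i = 0)
    (hk : ∀ k, k ≠ 0 → α * q k < q 0 ∨ α * d k ≤ d 0) :
    0 ≤ ∑ i, Real.log (q i / p i) * d i := by
  obtain ⟨h0, h1, h2⟩ := hqC
  have hder : HasDerivAt (fun t : ℝ => KLv (fun i => q i + t * d i) p)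
      (∑ i, (d i * Real.log (q i / p i) + d i)) 0 := by
    unfold KLv
    apply HasDerivAt.fun_sum
    intro i _
    have ha : HasDerivAt (fun t : ℝ => q i + t * d i) (d i) 0 := by
      simpa using ((hasDerivAt_id (0:ℝ)).mul_const (d i)).const_add (q i)
    have hq := (hqpos i).ne'
    have hpi := (hp i).ne'
    have hb := (ha.div_const (p i)).log (by simp [hq, hpi])
    refine HasDerivAt.congr_deriv (ha.mul hb) ?_
    simp only [zero_mul, add_zero]
    field_simp
  have hev : ∀ᶠ t : ℝ in 𝓝[>] 0, (fun i => q i + t * d i) ∈ C1 N α := by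
    have hpos : ∀ᶠ t : ℝ in 𝓝[>] 0, ∀ i, 0 < q i + t * d i := by
      rw [eventually_all]
      intro i
      have hc : ContinuousAt (fun t : ℝ => q i + t * d i) 0 := by fun_prop
      exact nhdsWithin_le_nhds (hc.eventually (lt_mem_nhds (by simpa using hqpos i)))
    have hcon : ∀ᶠ t : ℝ in 𝓝[>] 0, ∀ k, k ≠ 0 → α * (q k + t * d k) ≤ q 0 + t * d 0 := by
      rw [eventually_all]
      intro k
      by_cases hk0 : k = 0
      · simp [hk0]
      rcases hk k hk0 with h | h
      · have hc : ContinuousAt (fun t : ℝ => (q 0 + t * d 0) - α * (q k + t * d k)) 0 := by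
          fun_prop
        have := nhdsWithin_le_nhds (s := Set.Ioi (0:ℝ))
          (hc.eventually (lt_mem_nhds (a := 0) (by simpa using h)))
        filter_upwards [this] with t ht _
        linarith
      · filter_upwards [self_mem_nhdsWithin] with t ht _
        have ht' : 0 < t := ht
        have := h2 k hk0
        nlinarith
    filter_upwards [hpos, hcon] with t ht1 ht2
    refine ⟨fun i => (ht1 i).le, ?_, ht2⟩
    rw [Finset.sum_add_distrib, ← Finset.mul_sum, hd, h1]; ring
  have hlim := hder.hasDerivWithinAt (s := Set.Ioi 0)
  rw [hasDerivWithinAt_iff_tendsto_slope' (by simp)] at hlim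
  have hge := ge_of_tendsto (b := 0) hlim (by
    filter_upwards [hev, self_mem_nhdsWithin] with t ht ht0
    have ht' : 0 < t := ht0
    have := hqmin _ ht
    rw [slope_def_field]
    apply div_nonneg _ (by linarith)
    simpa using this)
  rw [Finset.sum_add_distrib, hd, add_zero] at hge
  simpa [mul_comm] using hge

/-- Existence and uniqueness of the KKT multipliers `λ` and `μ_j` (`j ≠ 0`) for the unique
minimizer `q*` of (P): the stationarity and complementary slackness conditions determine
them uniquely, with `μ_j ≥ 0`. -/
theorem statement5 (N : ℕ) [NeZero N] (hN : 2 ≤ N) (α : ℝ) (hα : 1 ≤ α)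
    (p : Fin N → ℝ) (hp : ∀ i, 0 < p i) (hps : ∑ i, p i = 1)
    (q : Fin N → ℝ) (hqC : q ∈ C1 N α)
    (hqmin : ∀ r ∈ C1 N α, KLv q p ≤ KLv r p)
    (hquniq : ∀ r, r ∈ C1 N α → (∀ s ∈ C1 N α, KLv r p ≤ KLv s p) → r = q)
    (hqpos : ∀ i, 0 < q i) :
    ∃! lm : ℝ × ({j : Fin N // j ≠ 0} → ℝ),
      (∀ j, 0 ≤ lm.2 j) ∧
      q 0 = p 0 * Real.exp ((∑ k, lm.2 k) - 1 - lm.1) ∧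
      (∀ j : {j : Fin N // j ≠ 0}, q j = p j * Real.exp (-(α * lm.2 j) - 1 - lm.1)) ∧
      (∀ j : {j : Fin N // j ≠ 0}, lm.2 j * (α * q j - q 0) = 0) := by
  have hα0 : 0 < α := by linarith
  have hsplit : ∀ f : Fin N → ℝ, ∑ i, f i = f 0 + ∑ j : {j : Fin N // j ≠ 0}, f j := by
    intro f
    rw [← Finset.add_sum_erase _ _ (Finset.mem_univ (0 : Fin N))]
    congr 1
    exact (Finset.sum_subtype _ (by simp) f)
  set g : Fin N → ℝ := fun i => Real.log (q i / p i) with hg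
  have hqg : ∀ i x, q i = p i * Real.exp x ↔ g i = x := by
    intro i x
    have h1 : Real.exp (g i) = q i / p i := Real.exp_log (div_pos (hqpos i) (hp i))
    have hpi := (hp i).ne'
    rw [← Real.exp_eq_exp (x := g i), h1, div_eq_iff hpi, mul_comm]
  set M : ℝ := (Fintype.card {j : Fin N // j ≠ 0} : ℝ) with hM
  have hM0 : 0 ≤ M := Nat.cast_nonneg _
  have hD : 0 < M + α := by linarith
  set S : ℝ := ∑ j : {j : Fin N // j ≠ 0}, g j with hS
  set c : ℝ := (α * g 0 + S) / (M + α) with hc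
  have hcD : c * (M + α) = α * g 0 + S := by rw [hc]; field_simp
  let u : Fin N → ℝ := fun i => (if i = 0 then α else 1) / (M + α)
  have hu0 : u 0 = α / (M + α) := by simp [u]
  have huk : ∀ k, k ≠ 0 → u k = 1 / (M + α) := fun k hk => by simp [u, hk]
  have husum : ∑ i, u i = 1 := by
    rw [hsplit, hu0, Finset.sum_congr rfl (fun j _ => huk j.1 j.2)]
    simp only [Finset.sum_const, Finset.card_univ, nsmul_eq_mul, ← hM]
    field_simp
    ring
  have hug : ∑ i, g i * u i = c := by
    have hh : ∑ j : {j : Fin N // j ≠ 0}, g j * u j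
        = ∑ j : {j : Fin N // j ≠ 0}, g j * (1 / (M + α)) :=
      Finset.sum_congr rfl (fun j _ => by rw [huk j.1 j.2])
    rw [hsplit, hu0, hh, ← Finset.sum_mul, ← hS, hc]
    field_simp
  have huα : ∀ k, k ≠ 0 → α * u k = u 0 := by
    intro k hk
    rw [hu0, huk k hk]; ring
  have hdir := dir_aux N α p hp q hqC hqmin hqpos
  have hle : ∀ j : {j : Fin N // j ≠ 0}, g j ≤ c := by
    intro j
    have := hdir (fun i => u i - if i = j.1 then 1 else 0)
      (by rw [Finset.sum_sub_distrib, husum]; simp)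
      (by
        intro k hk
        right
        have h0j : (0 : Fin N) ≠ j.1 := fun h => j.2 h.symm
        have := huα k hk
        simp only [h0j, if_false]
        split_ifs <;> linarith)
    simp only [mul_sub, Finset.sum_sub_distrib] at this
    change 0 ≤ ∑ i, g i * u i - _ at this
    rw [hug] at this
    simpa [hg] using this
  have hge : ∀ j : {j : Fin N // j ≠ 0}, α * q j < q 0 → c ≤ g j := by
    intro j hj
    have := hdir (fun i => (if i = j.1 then 1 else 0) - u i)
      (by rw [Finset.sum_sub_distrib, husum]; simp)
      (by
        intro k hk
        have h0j : (0 : Fin N) ≠ j.1 := fun h => j.2 h.symm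
        have := huα k hk
        by_cases hkj : k = j.1
        · left; rw [hkj]; exact hj
        · right
          simp only [h0j, hkj, if_false]
          linarith)
    simp only [mul_sub, Finset.sum_sub_distrib] at this
    change 0 ≤ _ - ∑ i, g i * u i at this
    rw [hug] at this
    simpa [hg] using this
  have hsum : ∀ x : ℝ, ∑ j : {j : Fin N // j ≠ 0}, (x - g j) / α = (M * x - S) / α := by
    intro x
    rw [← Finset.sum_div, Finset.sum_sub_distrib]
    simp only [Finset.sum_const, Finset.card_univ, nsmul_eq_mul, ← hM, ← hS]
  refine ⟨(-1 - c, fun j => (c - g j) / α), ⟨?_, ?_, ?_, ?_⟩, ?_⟩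
  · intro j
    exact div_nonneg (by linarith [hle j]) hα0.le
  · rw [hqg]
    simp only
    rw [hsum]
    field_simp
    linarith
  · intro j
    rw [hqg]
    simp only
    field_simp
    ring
  · intro j
    simp only
    rcases (hqC.2.2 j.1 j.2).lt_or_eq with h | h
    · have : g j = c := le_antisymm (hle j) (hge j h)
      rw [this]; simp
    · rw [h]; simp
  · rintro ⟨l, m⟩ ⟨-, h0, hj, -⟩
    simp only [hqg] at h0 hj
    have hm : m = fun j : {j : Fin N // j ≠ 0} => ((-1 - l) - g j) / α := by
      funext j
      rw [eq_div_iff hα0.ne']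
      linarith [hj j]
    have hl : -1 - l = c := by
      rw [hm, hsum] at h0
      rw [hc, eq_div_iff hD.ne']
      field_simp at h0
      linarith
    rw [hm, hl]
    congr 1
    linarith
end

section
/- If j ∈ {2, …, N} satisfies p_1 ≥ α·p_j, then the KKT multiplier μ_j equals 0, i.e., j ∉ A. In particular, A ⊆ B where B = {j ∈ {2, …, N} : α·p_j > p_1}. -/
/-- `g(S) = (p 0 ^ α * ∏_{j ∈ S} α * p j) ^ (1 / (|S| + α))`. -/
noncomputable def gfun {N : ℕ} [NeZero N] (α : ℝ) (p : Fin N → ℝ) (S : Finset (Fin N)) : ℝ :=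
  (p 0 ^ α * ∏ j ∈ S, α * p j) ^ ((1 : ℝ) / ((S.card : ℝ) + α))

/-- If `j ≠ 0` satisfies `p 0 ≥ α * p j`, then the KKT multiplier `μ j` is zero, i.e.
`j ∉ A`. In particular `A ⊆ B` where `B = {j ≠ 0 : α * p j > p 0}`. -/
theorem statement6 (N : ℕ) [NeZero N] (hN : 2 ≤ N) (α : ℝ) (hα : 1 ≤ α)
    (p : Fin N → ℝ) (hp : ∀ i, 0 < p i) (hps : ∑ i, p i = 1)
    (q : Fin N → ℝ) (hqC : q ∈ C1 N α)
    (hqmin : ∀ r ∈ C1 N α, KLv q p ≤ KLv r p)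
    (hquniq : ∀ r, r ∈ C1 N α → (∀ s ∈ C1 N α, KLv r p ≤ KLv s p) → r = q)
    (hqpos : ∀ i, 0 < q i)
    (l : ℝ) (μ : Fin N → ℝ) (hμnn : ∀ j, j ≠ 0 → 0 ≤ μ j)
    (hstat0 : q 0 = p 0 * Real.exp ((∑ k ∈ Finset.univ.erase 0, μ k) - 1 - l))
    (hstatj : ∀ j, j ≠ 0 → q j = p j * Real.exp (-(α * μ j) - 1 - l))
    (hslack : ∀ j, j ≠ 0 → μ j * (α * q j - q 0) = 0) :
    (∀ j, j ≠ 0 → α * p j ≤ p 0 → μ j = 0) ∧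
    Finset.univ.filter (fun j : Fin N => j ≠ 0 ∧ 0 < μ j) ⊆
      Finset.univ.filter (fun j : Fin N => j ≠ 0 ∧ p 0 < α * p j) := by
  have key : ∀ j, j ≠ 0 → α * p j ≤ p 0 → μ j = 0 := by
    intro j hj hle
    by_contra hne
    have hpos : 0 < μ j := lt_of_le_of_ne (hμnn j hj) (Ne.symm hne)
    have hS : 0 ≤ ∑ k ∈ Finset.univ.erase 0, μ k :=
      Finset.sum_nonneg fun k hk => hμnn k (Finset.ne_of_mem_erase hk)
    have heq : α * q j - q 0 = 0 := (mul_eq_zero.mp (hslack j hj)).resolve_left hne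
    have hαμ : 0 < α * μ j := mul_pos (by linarith) hpos
    have hexp : Real.exp (-(α * μ j) - 1 - l)
        < Real.exp ((∑ k ∈ Finset.univ.erase 0, μ k) - 1 - l) :=
      Real.exp_lt_exp.mpr (by linarith)
    have h1 : α * p j * Real.exp (-(α * μ j) - 1 - l)
        ≤ p 0 * Real.exp (-(α * μ j) - 1 - l) :=
      mul_le_mul_of_nonneg_right hle (Real.exp_pos _).le
    have h2 := mul_lt_mul_of_pos_left hexp (hp 0)
    rw [hstatj j hj, ← mul_assoc] at heq
    linarith
  refine ⟨key, ?_⟩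
  intro j hj
  simp only [Finset.mem_filter, Finset.mem_univ, true_and] at hj ⊢
  refine ⟨hj.1, ?_⟩
  by_contra h
  exact hj.2.ne' (key j hj.1 (not_lt.mp h))
end

section
/- The unique minimizer q* of (P) satisfies: q*_1 = exp(−1−λ)·g(A); q*_j = q*_1/α for every j ∈ A; q*_j = p_j·exp(−1−λ) for every j ∈ {2, …, N} \ A; and exp(∑_{k∈A} μ_k) = (p_1^{−|A|} · ∏_{j∈A} α·p_j)^{1/(|A| + α)}. -/
/-- Closed form of the minimizer in terms of the active set
`A = {j ≠ 0 : μ j > 0}`: `q* 0 = exp (-1-λ) * g A`, `q* j = q* 0 / α` on `A`,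
`q* j = p j * exp (-1-λ)` off `A`, and
`exp (∑_{k ∈ A} μ k) = (p 0 ^ (-|A|) * ∏_{j ∈ A} α * p j) ^ (1/(|A| + α))`. -/
theorem statement7 (N : ℕ) [NeZero N] (hN : 2 ≤ N) (α : ℝ) (hα : 1 ≤ α)
    (p : Fin N → ℝ) (hp : ∀ i, 0 < p i) (hps : ∑ i, p i = 1)
    (q : Fin N → ℝ) (hqC : q ∈ C1 N α)
    (hqmin : ∀ r ∈ C1 N α, KLv q p ≤ KLv r p)
    (hquniq : ∀ r, r ∈ C1 N α → (∀ s ∈ C1 N α, KLv r p ≤ KLv s p) → r = q)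
    (hqpos : ∀ i, 0 < q i)
    (l : ℝ) (μ : Fin N → ℝ) (hμnn : ∀ j, j ≠ 0 → 0 ≤ μ j)
    (hstat0 : q 0 = p 0 * Real.exp ((∑ k ∈ Finset.univ.erase 0, μ k) - 1 - l))
    (hstatj : ∀ j, j ≠ 0 → q j = p j * Real.exp (-(α * μ j) - 1 - l))
    (hslack : ∀ j, j ≠ 0 → μ j * (α * q j - q 0) = 0)
    (A : Finset (Fin N)) (hA : A = Finset.univ.filter (fun j : Fin N => j ≠ 0 ∧ 0 < μ j)) :
    q 0 = Real.exp (-1 - l) * gfun α p A ∧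
    (∀ j ∈ A, q j = q 0 / α) ∧
    (∀ j, j ≠ 0 → j ∉ A → q j = p j * Real.exp (-1 - l)) ∧
    Real.exp (∑ k ∈ A, μ k) =
      (p 0 ^ (-(A.card : ℝ)) * ∏ j ∈ A, α * p j) ^ ((1 : ℝ) / ((A.card : ℝ) + α)) := by
  have hα0 : 0 < α := by linarith
  have hp0 := hp 0
  have hsum : ∑ k ∈ Finset.univ.erase 0, μ k = ∑ k ∈ A, μ k := by
    symm
    apply Finset.sum_subset
    · intro j hj
      rw [hA] at hj
      simp at hj
      simp [hj.1]
    · intro j hj hjA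
      rw [hA] at hjA
      simp at hj hjA
      exact le_antisymm (hjA hj) (hμnn j hj)
  rw [hsum] at hstat0
  have hact : ∀ j ∈ A, α * q j = q 0 := by
    intro j hj
    rw [hA] at hj
    simp at hj
    rcases mul_eq_zero.mp (hslack j hj.1) with h | h
    · linarith [hj.2]
    · linarith
  have hmem : ∀ j ∈ A, j ≠ 0 := by
    intro j hj
    rw [hA] at hj
    simp at hj
    exact hj.1
  set M := ∑ k ∈ A, μ k with hM
  have hfac : ∀ j ∈ A, α * p j = p 0 * Real.exp (M + α * μ j) := by
    intro j hj
    have h1 := hact j hj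
    rw [hstatj j (hmem j hj), hstat0] at h1
    have e1 : Real.exp (M - 1 - l)
        = Real.exp (M + α * μ j) * Real.exp (-(α * μ j) - 1 - l) := by
      rw [← Real.exp_add]; congr 1; ring
    rw [e1] at h1
    apply mul_right_cancel₀ (Real.exp_pos (-(α * μ j) - 1 - l)).ne'
    linarith
  have hn : 0 < (A.card : ℝ) + α := by positivity
  have hprod : ∏ j ∈ A, α * p j = p 0 ^ (A.card : ℝ) * Real.exp (M * ((A.card : ℝ) + α)) := by
    rw [Finset.prod_congr rfl hfac, Finset.prod_mul_distrib, ← Real.exp_sum,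
      Finset.prod_const, Real.rpow_natCast, Finset.sum_add_distrib, ← Finset.mul_sum, ← hM]
    congr 2
    simp
    ring
  have hexp : Real.exp (M * ((A.card : ℝ) + α)) ^ ((1 : ℝ) / ((A.card : ℝ) + α))
      = Real.exp M := by
    rw [← Real.exp_mul]; congr 1; field_simp
  refine ⟨?_, ?_, ?_, ?_⟩
  · have hg : gfun α p A = p 0 * Real.exp M := by
      unfold gfun
      rw [hprod, ← mul_assoc, ← Real.rpow_add hp0, Real.mul_rpow (by positivity) (by positivity),
        hexp, ← Real.rpow_mul hp0.le]
      have : (α + (A.card : ℝ)) * (1 / ((A.card : ℝ) + α)) = 1 := by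
        rw [add_comm α]; field_simp
      rw [this, Real.rpow_one]
    rw [hg, hstat0, show M - 1 - l = (-1 - l) + M by ring, Real.exp_add]
    ring
  · intro j hj
    rw [← hact j hj]; field_simp
  · intro j hj hjA
    have : μ j = 0 := by
      rw [hA] at hjA
      simp at hjA
      exact le_antisymm (hjA hj) (hμnn j hj)
    rw [hstatj j hj, this]; simp
  · rw [hprod, ← mul_assoc, ← Real.rpow_add hp0]
    simp only [neg_add_cancel, Real.rpow_zero, one_mul]
    exact hexp.symm
end

section
/- The KKT multiplier λ of (P) satisfies exp(1 + λ) = (1 + |A|/α)·g(A) + ∑_{j ∉ A ∪ {1}} p_j, and the minimum value of (P) equals KL(q*‖p) = −(1 + λ) = −log( (1 + |A|/α)·g(A) + ∑_{j ∉ A ∪ {1}} p_j ). In particular, (1 + |A|/α)·g(A) + ∑_{j ∉ A ∪ {1}} p_j ≤ 1. -/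
/-- Value of the multiplier `λ` and of the minimum:
`exp (1 + λ) = (1 + |A|/α) * g A + ∑_{j ∉ A ∪ {0}} p j`, the minimum value of (P) is
`KL(q*‖p) = -(1+λ) = -log ((1 + |A|/α) * g A + ∑_{j ∉ A ∪ {0}} p j)`, and in particular
this quantity is at most `1`. -/
theorem statement8 (N : ℕ) [NeZero N] (hN : 2 ≤ N) (α : ℝ) (hα : 1 ≤ α)
    (p : Fin N → ℝ) (hp : ∀ i, 0 < p i) (hps : ∑ i, p i = 1)
    (q : Fin N → ℝ) (hqC : q ∈ C1 N α)
    (hqmin : ∀ r ∈ C1 N α, KLv q p ≤ KLv r p)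
    (hquniq : ∀ r, r ∈ C1 N α → (∀ s ∈ C1 N α, KLv r p ≤ KLv s p) → r = q)
    (hqpos : ∀ i, 0 < q i)
    (l : ℝ) (μ : Fin N → ℝ) (hμnn : ∀ j, j ≠ 0 → 0 ≤ μ j)
    (hstat0 : q 0 = p 0 * Real.exp ((∑ k ∈ Finset.univ.erase 0, μ k) - 1 - l))
    (hstatj : ∀ j, j ≠ 0 → q j = p j * Real.exp (-(α * μ j) - 1 - l))
    (hslack : ∀ j, j ≠ 0 → μ j * (α * q j - q 0) = 0)
    (A : Finset (Fin N)) (hA : A = Finset.univ.filter (fun j : Fin N => j ≠ 0 ∧ 0 < μ j)) :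
    Real.exp (1 + l) =
      (1 + (A.card : ℝ) / α) * gfun α p A + ∑ j ∈ Finset.univ.erase 0 \ A, p j ∧
    KLv q p = -(1 + l) ∧
    KLv q p =
      -Real.log ((1 + (A.card : ℝ) / α) * gfun α p A + ∑ j ∈ Finset.univ.erase 0 \ A, p j) ∧
    (1 + (A.card : ℝ) / α) * gfun α p A + ∑ j ∈ Finset.univ.erase 0 \ A, p j ≤ 1 := by
  have hα0 : 0 < α := by linarith
  obtain ⟨_, hqs, _⟩ := hqC
  set M := ∑ k ∈ Finset.univ.erase 0, μ k with hM
  have hAsub : A ⊆ Finset.univ.erase 0 := by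
    intro j hj
    rw [hA] at hj
    simp at hj
    simp [hj.1]
  have hAne : ∀ j ∈ A, j ≠ 0 ∧ 0 < μ j := by
    intro j hj
    rw [hA] at hj
    simpa using hj
  have hnA : ∀ j ∈ Finset.univ.erase 0 \ A, j ≠ 0 ∧ μ j = 0 := by
    intro j hj
    rw [Finset.mem_sdiff, hA] at hj
    simp at hj
    exact ⟨hj.1, le_antisymm (hj.2 hj.1) (hμnn j hj.1)⟩
  have hMA : M = ∑ k ∈ A, μ k := by
    rw [hM, ← Finset.sum_sdiff hAsub, Finset.sum_eq_zero (fun j hj => (hnA j hj).2), zero_add]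
  have hG0 : q 0 * Real.exp (1 + l) = p 0 * Real.exp M := by
    rw [hstat0, mul_assoc, ← Real.exp_add]
    congr 2
    ring
  have hGj : ∀ j, j ≠ 0 → q j * Real.exp (1 + l) = p j * Real.exp (-(α * μ j)) := by
    intro j hj
    rw [hstatj j hj, mul_assoc, ← Real.exp_add]
    congr 2
    ring
  have hGA : ∀ j ∈ A, α * q j = q 0 := by
    intro j hj
    have h := hslack j (hAne j hj).1
    rcases mul_eq_zero.mp h with h | h
    · exact absurd h (hAne j hj).2.ne'
    · linarith
  have hGpos : 0 < q 0 * Real.exp (1 + l) := mul_pos (hqpos 0) (Real.exp_pos _)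
  have hg : gfun α p A = q 0 * Real.exp (1 + l) := by
    have hpow : p 0 ^ α * ∏ j ∈ A, α * p j
        = (q 0 * Real.exp (1 + l)) ^ ((A.card : ℝ) + α) := by
      have h1 : (q 0 * Real.exp (1 + l)) ^ α = p 0 ^ α * Real.exp (M * α) := by
        rw [hG0, Real.mul_rpow (hp 0).le (Real.exp_pos _).le, ← Real.exp_mul]
      have h2 : (q 0 * Real.exp (1 + l)) ^ A.card
          = (∏ j ∈ A, α * p j) * Real.exp (-(M * α)) := by
        rw [← Finset.prod_const, hMA, Finset.sum_mul, ← Finset.sum_neg_distrib, Real.exp_sum,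
          ← Finset.prod_mul_distrib]
        refine Finset.prod_congr rfl fun j hj => ?_
        rw [← hGA j hj, mul_assoc, hGj j (hAne j hj).1, mul_comm α (μ j), mul_assoc]
      rw [Real.rpow_add hGpos, Real.rpow_natCast, h1, h2, Real.exp_neg]
      field_simp
    have hc : (A.card : ℝ) + α ≠ 0 := by positivity
    rw [gfun, hpow, ← Real.rpow_mul hGpos.le, mul_one_div_cancel hc, Real.rpow_one]
  have hmain : Real.exp (1 + l) =
      (1 + (A.card : ℝ) / α) * gfun α p A + ∑ j ∈ Finset.univ.erase 0 \ A, p j := by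
    have e1 : ∑ j ∈ Finset.univ.erase 0 \ A, p j
        = ∑ j ∈ Finset.univ.erase 0 \ A, q j * Real.exp (1 + l) := by
      refine Finset.sum_congr rfl fun j hj => ?_
      rw [hGj j (hnA j hj).1, (hnA j hj).2]
      simp
    have e2 : ∑ j ∈ A, q j = A.card * (q 0 / α) := by
      rw [← nsmul_eq_mul, ← Finset.sum_const]
      refine Finset.sum_congr rfl fun j hj => ?_
      rw [← hGA j hj]
      field_simp
    have e3 : q 0 + (∑ j ∈ Finset.univ.erase 0 \ A, q j + ∑ j ∈ A, q j) = 1 := by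
      rw [Finset.sum_sdiff hAsub, Finset.add_sum_erase _ _ (Finset.mem_univ _), hqs]
    rw [hg, e1, ← Finset.sum_mul]
    rw [e2] at e3
    have : ∑ j ∈ Finset.univ.erase 0 \ A, q j = 1 - q 0 - A.card * (q 0 / α) := by linarith
    rw [this]
    ring
  have hKL : KLv q p = -(1 + l) := by
    have hl0 : Real.log (q 0 / p 0) = M - 1 - l := by
      rw [hstat0, mul_div_cancel_left₀ _ (hp 0).ne', Real.log_exp]
    have hs : ∑ j ∈ Finset.univ.erase 0, q j * Real.log (q j / p j)
        = ∑ j ∈ Finset.univ.erase 0, (-(q 0 * μ j) + q j * (-(1 + l))) := by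
      refine Finset.sum_congr rfl fun j hj => ?_
      have hj0 : j ≠ 0 := Finset.ne_of_mem_erase hj
      have : Real.log (q j / p j) = -(α * μ j) - 1 - l := by
        rw [hstatj j hj0, mul_div_cancel_left₀ _ (hp j).ne', Real.log_exp]
      rw [this]
      linear_combination -(hslack j hj0)
    have e3 : q 0 + ∑ j ∈ Finset.univ.erase 0, q j = 1 := by
      rw [Finset.add_sum_erase _ _ (Finset.mem_univ _), hqs]
    rw [KLv, ← Finset.add_sum_erase _ _ (Finset.mem_univ 0), hs, hl0, Finset.sum_add_distrib,
      Finset.sum_neg_distrib, ← Finset.mul_sum, ← Finset.sum_mul, ← hM]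
    linear_combination (-(1 + l)) * e3
  have hKL0 : 0 ≤ KLv q p := by
    have : ∑ i, (q i - p i) ≤ KLv q p := by
      refine Finset.sum_le_sum fun i _ => ?_
      have h := Real.one_sub_inv_le_log_of_pos (div_pos (hqpos i) (hp i))
      have h2 := mul_le_mul_of_nonneg_left h (hqpos i).le
      have h3 : q i * (1 - (q i / p i)⁻¹) = q i - p i := by
        have := (hqpos i).ne'
        field_simp
      linarith
    rw [Finset.sum_sub_distrib, hqs, hps] at this
    linarith
  refine ⟨hmain, hKL, ?_, ?_⟩
  · rw [← hmain, Real.log_exp, hKL]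
  · rw [← hmain]
    exact Real.exp_le_one_iff.mpr (by linarith)
end

section
/- If B ≠ ∅, then the index j_1 corresponding to the largest element of B belongs to the active set: j_1 ∈ A, i.e., μ_{j_1} > 0; in particular the constraint is active at the minimizer, q*_1 = α·q*_{j_1}. -/
/-- If `B = {j ≠ 0 : α * p j > p 0}` is nonempty, then any index of `B` attaining the
largest value of `p` over `B` (i.e. the index `j₁` of the paper's enumeration) belongs to
the active set: `μ j₁ > 0`; in particular the corresponding constraint is active at the
minimizer, `q* 0 = α * q* j₁`. -/
theorem statement9 (N : ℕ) [NeZero N] (hN : 2 ≤ N) (α : ℝ) (hα : 1 ≤ α)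
    (p : Fin N → ℝ) (hp : ∀ i, 0 < p i) (hps : ∑ i, p i = 1)
    (q : Fin N → ℝ) (hqC : q ∈ C1 N α)
    (hqmin : ∀ r ∈ C1 N α, KLv q p ≤ KLv r p)
    (hquniq : ∀ r, r ∈ C1 N α → (∀ s ∈ C1 N α, KLv r p ≤ KLv s p) → r = q)
    (hqpos : ∀ i, 0 < q i)
    (l : ℝ) (μ : Fin N → ℝ) (hμnn : ∀ j, j ≠ 0 → 0 ≤ μ j)
    (hstat0 : q 0 = p 0 * Real.exp ((∑ k ∈ Finset.univ.erase 0, μ k) - 1 - l))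
    (hstatj : ∀ j, j ≠ 0 → q j = p j * Real.exp (-(α * μ j) - 1 - l))
    (hslack : ∀ j, j ≠ 0 → μ j * (α * q j - q 0) = 0)
    (B : Finset (Fin N)) (hB : B = Finset.univ.filter (fun j : Fin N => j ≠ 0 ∧ p 0 < α * p j))
    (hBne : B.Nonempty) :
    ∀ j ∈ B, (∀ k ∈ B, p k ≤ p j) → (0 < μ j ∧ q 0 = α * q j) := by
  intro j hj hmax
  subst hB
  simp only [Finset.mem_filter, Finset.mem_univ, true_and] at hj hmax
  obtain ⟨hj0, hjB⟩ := hj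
  have hαpos : 0 < α := by linarith
  have hpos : 0 < μ j := by
    by_contra hneg
    have hμj : μ j = 0 := le_antisymm (not_lt.mp hneg) (hμnn j hj0)
    have hfeas := hqC.2.2 j hj0
    set M := ∑ k ∈ Finset.univ.erase 0, μ k with hM
    have hE : 0 < Real.exp (-1 - l) := Real.exp_pos _
    have e0 : q 0 = p 0 * Real.exp M * Real.exp (-1 - l) := by
      rw [hstat0, mul_assoc, ← Real.exp_add]; congr 2; ring
    have ej : ∀ k, k ≠ 0 → q k = p k * Real.exp (-(α * μ k)) * Real.exp (-1 - l) := by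
      intro k hk
      rw [hstatj k hk, mul_assoc, ← Real.exp_add]; congr 2; ring
    have h1 : α * p j ≤ p 0 * Real.exp M := by
      have h := ej j hj0
      rw [hμj] at h
      simp only [mul_zero, neg_zero, Real.exp_zero, mul_one] at h
      rw [h, e0, ← mul_assoc] at hfeas
      exact le_of_mul_le_mul_right hfeas hE
    have hMpos : 0 < M := by
      by_contra hM0
      have hexp : Real.exp M ≤ 1 := Real.exp_le_one_iff.mpr (not_lt.mp hM0)
      nlinarith [hp 0]
    obtain ⟨k, hk, hkpos⟩ : ∃ k ∈ Finset.univ.erase (0 : Fin N), 0 < μ k := by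
      by_contra hno
      push Not at hno
      exact absurd hMpos (not_lt.mpr (Finset.sum_nonpos hno))
    have hk0 : k ≠ 0 := Finset.ne_of_mem_erase hk
    have hact : α * q k = q 0 := by
      rcases mul_eq_zero.mp (hslack k hk0) with h | h <;> linarith
    have h2 : α * (p k * Real.exp (-(α * μ k))) = p 0 * Real.exp M := by
      rw [ej k hk0, e0, ← mul_assoc] at hact
      exact mul_right_cancel₀ hE.ne' hact
    have hlt : Real.exp (-(α * μ k)) < 1 :=
      Real.exp_lt_one_iff.mpr (neg_lt_zero.mpr (mul_pos hαpos hkpos))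
    have h3 : p k * Real.exp (-(α * μ k)) < p k := mul_lt_of_lt_one_right (hp k) hlt
    have h4 : α * (p k * Real.exp (-(α * μ k))) < α * p k := mul_lt_mul_of_pos_left h3 hαpos
    have h5 : p k ≤ p j := hmax k ⟨hk0, by linarith⟩
    have h6 : α * p k ≤ α * p j := mul_le_mul_of_nonneg_left h5 hαpos.le
    linarith
  refine ⟨hpos, ?_⟩
  rcases mul_eq_zero.mp (hslack j hj0) with h | h <;> linarith
end

section
/- Let 2 ≤ t ≤ |B| and suppose C = {j_1, …, j_{t−1}} ⊆ A. If g(C) < α·p_{j_t}, then j_t ∈ A, i.e., μ_{j_t} > 0. -/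
/-- Let `2 ≤ t ≤ |B|` and `C = {j₁, …, j_{t-1}} ⊆ A` (where `e` enumerates `B` so that
`p (e 0) ≥ p (e 1) ≥ …`, so `j_s = e (s-1)`). If `g C < α * p (j_t)`, then `j_t ∈ A`,
i.e. `μ (j_t) > 0`. -/
theorem statement10 (N : ℕ) [NeZero N] (hN : 2 ≤ N) (α : ℝ) (hα : 1 ≤ α)
    (p : Fin N → ℝ) (hp : ∀ i, 0 < p i) (hps : ∑ i, p i = 1)
    (q : Fin N → ℝ) (hqC : q ∈ C1 N α)
    (hqmin : ∀ r ∈ C1 N α, KLv q p ≤ KLv r p)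
    (hquniq : ∀ r, r ∈ C1 N α → (∀ s ∈ C1 N α, KLv r p ≤ KLv s p) → r = q)
    (hqpos : ∀ i, 0 < q i)
    (l : ℝ) (μ : Fin N → ℝ) (hμnn : ∀ j, j ≠ 0 → 0 ≤ μ j)
    (hstat0 : q 0 = p 0 * Real.exp ((∑ k ∈ Finset.univ.erase 0, μ k) - 1 - l))
    (hstatj : ∀ j, j ≠ 0 → q j = p j * Real.exp (-(α * μ j) - 1 - l))
    (hslack : ∀ j, j ≠ 0 → μ j * (α * q j - q 0) = 0)
    (A : Finset (Fin N)) (hA : A = Finset.univ.filter (fun j : Fin N => j ≠ 0 ∧ 0 < μ j))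
    (B : Finset (Fin N)) (hB : B = Finset.univ.filter (fun j : Fin N => j ≠ 0 ∧ p 0 < α * p j))
    (e : ℕ → Fin N)
    (he_mem : ∀ s, s < B.card → e s ∈ B)
    (he_inj : ∀ s s', s < B.card → s' < B.card → e s = e s' → s = s')
    (he_surj : ∀ j ∈ B, ∃ s, s < B.card ∧ e s = j)
    (he_anti : ∀ s s', s ≤ s' → s' < B.card → p (e s') ≤ p (e s))
    (t : ℕ) (ht2 : 2 ≤ t) (htB : t ≤ B.card)
    (C : Finset (Fin N)) (hC : C = (Finset.range (t - 1)).image e)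
    (hCA : C ⊆ A)
    (hlt : gfun α p C < α * p (e (t - 1))) :
    0 < μ (e (t - 1)) := by
  have hα0 : 0 < α := by linarith
  obtain ⟨hq0, hq1, hqk⟩ := hqC
  set M := ∑ k ∈ Finset.univ.erase 0, μ k with hM
  have hmB : e (t - 1) ∈ B := he_mem _ (by omega)
  have hm0 : e (t - 1) ≠ 0 := by
    rw [hB] at hmB
    exact (Finset.mem_filter.mp hmB).2.1
  by_contra hcon
  have hμm : μ (e (t - 1)) = 0 := le_antisymm (not_lt.mp hcon) (hμnn _ hm0)
  have hMnn : 0 ≤ M := Finset.sum_nonneg (fun k hk => hμnn k (Finset.ne_of_mem_erase hk))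
  -- logarithms of the stationarity equations
  have hlq0 : Real.log (q 0) = Real.log (p 0) + (M - 1 - l) := by
    rw [hstat0, Real.log_mul (hp 0).ne' (Real.exp_pos _).ne', Real.log_exp]
  have hlqj : ∀ j, j ≠ 0 → Real.log (α * q j) = Real.log (α * p j) + (-(α * μ j) - 1 - l) := by
    intro j hj
    rw [hstatj j hj, ← mul_assoc, Real.log_mul (mul_pos hα0 (hp j)).ne' (Real.exp_pos _).ne',
      Real.log_exp]
  have hle : Real.log (α * p (e (t - 1))) ≤ Real.log (p 0) + M := by
    have h := Real.log_le_log (mul_pos hα0 (hqpos _)) (hqk _ hm0)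
    rw [hlq0, hlqj _ hm0, hμm] at h
    linarith
  have heq : ∀ j, j ≠ 0 → 0 < μ j → Real.log (α * p j) - α * μ j = Real.log (p 0) + M := by
    intro j hj hμ
    have h1 : α * q j = q 0 := by
      rcases mul_eq_zero.mp (hslack j hj) with h | h <;> linarith
    have h2 := hlqj j hj
    rw [h1, hlq0] at h2
    linarith
  have hAC : A ⊆ C := by
    intro j hj
    rw [hA] at hj
    obtain ⟨-, hj0, hμ⟩ := Finset.mem_filter.mp hj
    have h := heq j hj0 hμ
    have hpos := mul_pos hα0 hμ
    have hjB : j ∈ B := by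
      rw [hB]
      refine Finset.mem_filter.mpr ⟨Finset.mem_univ _, hj0, ?_⟩
      exact (Real.log_lt_log_iff (hp 0) (mul_pos hα0 (hp j))).mp (by linarith)
    have hlt2 : p (e (t - 1)) < p j := by
      have := (Real.log_lt_log_iff (mul_pos hα0 (hp (e (t - 1)))) (mul_pos hα0 (hp j))).mp
        (by linarith)
      exact lt_of_mul_lt_mul_left this hα0.le
    obtain ⟨s, hs, rfl⟩ := he_surj j hjB
    rw [hC]
    refine Finset.mem_image_of_mem e (Finset.mem_range.mpr ?_)
    by_contra hns
    exact absurd (he_anti (t - 1) s (not_lt.mp hns) hs) (not_le.mpr hlt2)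
  have hCeq : C = A := Finset.Subset.antisymm hCA hAC
  have hCprop : ∀ j ∈ C, j ≠ 0 ∧ 0 < μ j := by
    intro j hj
    rw [hCeq, hA] at hj
    exact (Finset.mem_filter.mp hj).2
  have hMC : M = ∑ j ∈ C, μ j := by
    rw [hM]
    symm
    apply Finset.sum_subset
    · intro j hj
      exact Finset.mem_erase.mpr ⟨(hCprop j hj).1, Finset.mem_univ _⟩
    · intro j hj hjC
      have hj0 := Finset.ne_of_mem_erase hj
      refine le_antisymm (not_lt.mp fun h => hjC ?_) (hμnn j hj0)
      rw [hCeq, hA]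
      exact Finset.mem_filter.mpr ⟨Finset.mem_univ _, hj0, h⟩
  have hsum : ∑ j ∈ C, Real.log (α * p j) = α * M + C.card * (Real.log (p 0) + M) := by
    rw [hMC, Finset.mul_sum, ← hMC, ← nsmul_eq_mul, ← Finset.sum_const, ← Finset.sum_add_distrib]
    refine Finset.sum_congr rfl fun j hj => ?_
    have := heq j (hCprop j hj).1 (hCprop j hj).2
    linarith
  have hprod : 0 < ∏ j ∈ C, α * p j := Finset.prod_pos fun j _ => mul_pos hα0 (hp j)
  have hpow : 0 < p 0 ^ α := Real.rpow_pos_of_pos (hp 0) _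
  have hden : 0 < (C.card : ℝ) + α := by positivity
  have hlg : Real.log (gfun α p C) = Real.log (p 0) + M := by
    unfold gfun
    rw [Real.log_rpow (mul_pos hpow hprod), Real.log_mul hpow.ne' hprod.ne',
      Real.log_rpow (hp 0), Real.log_prod (fun j _ => (mul_pos hα0 (hp j)).ne'), hsum]
    field_simp
    ring
  have hg : 0 < gfun α p C := Real.rpow_pos_of_pos (mul_pos hpow hprod) _
  have := Real.log_lt_log hg hlt
  linarith
end

section
/- Let 2 ≤ t ≤ |B| and suppose C = {j_1, …, j_{t−1}} ⊆ A. If g(C) ≥ α·p_{j_t}, then j_s ∉ A (i.e., μ_{j_s} = 0) for every s ∈ {t, t+1, …, |B|}; consequently A = C. -/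
/-- Let `2 ≤ t ≤ |B|` and `C = {j₁, …, j_{t-1}} ⊆ A` (where `e` enumerates `B` so that
`p (e 0) ≥ p (e 1) ≥ …`, so `j_s = e (s-1)`). If `g C ≥ α * p (j_t)`, then `j_s ∉ A`
(i.e. `μ (j_s) = 0`) for every `s ∈ {t, …, |B|}`; consequently `A = C`. -/
theorem statement11 (N : ℕ) [NeZero N] (hN : 2 ≤ N) (α : ℝ) (hα : 1 ≤ α)
    (p : Fin N → ℝ) (hp : ∀ i, 0 < p i) (hps : ∑ i, p i = 1)
    (q : Fin N → ℝ) (hqC : q ∈ C1 N α)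
    (hqmin : ∀ r ∈ C1 N α, KLv q p ≤ KLv r p)
    (hquniq : ∀ r, r ∈ C1 N α → (∀ s ∈ C1 N α, KLv r p ≤ KLv s p) → r = q)
    (hqpos : ∀ i, 0 < q i)
    (l : ℝ) (μ : Fin N → ℝ) (hμnn : ∀ j, j ≠ 0 → 0 ≤ μ j)
    (hstat0 : q 0 = p 0 * Real.exp ((∑ k ∈ Finset.univ.erase 0, μ k) - 1 - l))
    (hstatj : ∀ j, j ≠ 0 → q j = p j * Real.exp (-(α * μ j) - 1 - l))
    (hslack : ∀ j, j ≠ 0 → μ j * (α * q j - q 0) = 0)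
    (A : Finset (Fin N)) (hA : A = Finset.univ.filter (fun j : Fin N => j ≠ 0 ∧ 0 < μ j))
    (B : Finset (Fin N)) (hB : B = Finset.univ.filter (fun j : Fin N => j ≠ 0 ∧ p 0 < α * p j))
    (e : ℕ → Fin N)
    (he_mem : ∀ s, s < B.card → e s ∈ B)
    (he_inj : ∀ s s', s < B.card → s' < B.card → e s = e s' → s = s')
    (he_surj : ∀ j ∈ B, ∃ s, s < B.card ∧ e s = j)
    (he_anti : ∀ s s', s ≤ s' → s' < B.card → p (e s') ≤ p (e s))
    (t : ℕ) (ht2 : 2 ≤ t) (htB : t ≤ B.card)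
    (C : Finset (Fin N)) (hC : C = (Finset.range (t - 1)).image e)
    (hCA : C ⊆ A)
    (hge : α * p (e (t - 1)) ≤ gfun α p C) :
    (∀ s, t ≤ s → s ≤ B.card → μ (e (s - 1)) = 0) ∧ A = C := by
  have hα0 : 0 < α := by linarith
  set M := ∑ k ∈ Finset.univ.erase 0, μ k with hM
  set T := Real.log (p 0) + M with hT
  have hlog0 : Real.log (q 0) = T - 1 - l := by
    rw [hstat0, Real.log_mul (hp 0).ne' (Real.exp_pos _).ne', Real.log_exp]; ring
  have hlogj : ∀ j, j ≠ 0 → Real.log (α * q j) = Real.log (α * p j) - α * μ j - 1 - l := by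
    intro j hj
    rw [hstatj j hj, ← mul_assoc, Real.log_mul (mul_pos hα0 (hp j)).ne' (Real.exp_pos _).ne',
      Real.log_exp]; ring
  have hact : ∀ j, j ≠ 0 → 0 < μ j → α * μ j = Real.log (α * p j) - T := by
    intro j hj hμ
    have h1 : α * q j = q 0 := by
      rcases mul_eq_zero.mp (hslack j hj) with h | h <;> linarith
    have h2 := hlogj j hj
    rw [h1, hlog0] at h2
    linarith
  have hM0 : 0 ≤ M := Finset.sum_nonneg fun k hk => hμnn k (Finset.ne_of_mem_erase hk)
  have hmemA : ∀ j, j ∈ A ↔ j ≠ 0 ∧ 0 < μ j := by intro j; simp [hA]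
  have hmemB : ∀ j, j ∈ B ↔ j ≠ 0 ∧ p 0 < α * p j := by intro j; simp [hB]
  have hCM : ∑ j ∈ C, μ j ≤ M := by
    apply Finset.sum_le_sum_of_subset_of_nonneg
    · intro j hj
      have := (hmemA j).1 (hCA hj)
      simp [this.1]
    · intro j hj _
      exact hμnn j (Finset.ne_of_mem_erase hj)
  have hCsum : α * ∑ j ∈ C, μ j = ∑ j ∈ C, Real.log (α * p j) - C.card * T := by
    rw [Finset.mul_sum, Finset.sum_congr rfl (fun j hj =>
      hact j ((hmemA j).1 (hCA hj)).1 ((hmemA j).1 (hCA hj)).2), Finset.sum_sub_distrib]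
    simp
  have hprod : 0 < ∏ j ∈ C, α * p j := Finset.prod_pos fun j _ => mul_pos hα0 (hp j)
  have hpow : 0 < p 0 ^ α := Real.rpow_pos_of_pos (hp 0) _
  have hden : 0 < (C.card : ℝ) + α := by positivity
  have hG : Real.log (gfun α p C) ≤ T := by
    unfold gfun
    rw [Real.log_rpow (mul_pos hpow hprod), Real.log_mul hpow.ne' hprod.ne',
      Real.log_rpow (hp 0), Real.log_prod (fun j _ => (mul_pos hα0 (hp j)).ne'),
      one_div, inv_mul_le_iff₀ hden]
    have := mul_le_mul_of_nonneg_left hCM hα0.le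
    have hTe : α * T = α * Real.log (p 0) + α * M := by rw [hT]; ring
    nlinarith
  have hlt : Real.log (α * p (e (t - 1))) ≤ T :=
    (Real.log_le_log (mul_pos hα0 (hp _)) hge).trans hG
  have key : ∀ s, t ≤ s → s ≤ B.card → μ (e (s - 1)) = 0 := by
    intro s hs hsB
    have hm := (hmemB _).1 (he_mem (s - 1) (by omega))
    have han := he_anti (t - 1) (s - 1) (by omega) (by omega)
    by_contra hne
    have hpos : 0 < μ (e (s - 1)) := lt_of_le_of_ne (hμnn _ hm.1) (Ne.symm hne)
    have h1 := hact _ hm.1 hpos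
    have h2 : Real.log (α * p (e (s - 1))) ≤ Real.log (α * p (e (t - 1))) :=
      Real.log_le_log (mul_pos hα0 (hp _)) (mul_le_mul_of_nonneg_left han hα0.le)
    have h3 := mul_pos hα0 hpos
    linarith
  refine ⟨key, Finset.Subset.antisymm ?_ hCA⟩
  intro j hj
  obtain ⟨hj0, hjμ⟩ := (hmemA j).1 hj
  have h1 := hact j hj0 hjμ
  have h3 := mul_pos hα0 hjμ
  have hjB : j ∈ B := (hmemB j).2 ⟨hj0, (Real.log_lt_log_iff (hp 0)
    (mul_pos hα0 (hp j))).1 (by linarith)⟩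
  obtain ⟨s, hs, rfl⟩ := he_surj j hjB
  by_cases hst : s < t - 1
  · rw [hC]; exact Finset.mem_image_of_mem e (Finset.mem_range.2 hst)
  · have := key (s + 1) (by omega) (by omega)
    simp at this
    linarith
end

section
/- Let t* be the largest t ∈ {0, 1, …, |B|} such that g({j_1, …, j_{s−1}}) < α·p_{j_s} holds for every s ∈ {1, …, t} (so t* ≥ 1 whenever B ≠ ∅, since g(∅) = p_1). Set A* = {j_1, …, j_{t*}} and Z = (1 + |A*|/α)·g(A*) + ∑_{j ∉ A* ∪ {1}} p_j. Then the unique minimizer q* of (P) is given by q*_1 = g(A*)/Z, q*_j = g(A*)/(α·Z) for every j ∈ A*, and q*_j = p_j/Z for every j ∈ {2, …, N} \ A*. -/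
lemma aux_term (x y : ℝ) (hx : 0 ≤ x) (hy : 0 < y) : x - y ≤ x * Real.log (x / y) := by
  rcases hx.eq_or_lt with h | h
  · rw [← h]; simp; exact hy.le
  · have h1 := Real.one_sub_inv_le_log_of_pos (div_pos h hy)
    have h2 := mul_le_mul_of_nonneg_left h1 hx
    have h3 : x * (1 - (x / y)⁻¹) = x - y := by field_simp
    linarith

lemma aux_term_eq (x y : ℝ) (hx : 0 ≤ x) (hy : 0 < y) (he : x * Real.log (x / y) = x - y) :
    x = y := by
  rcases hx.eq_or_lt with h | h
  · rw [← h] at he; simp at he; linarith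
  · by_contra hne
    have hne' : y / x ≠ 1 := by
      intro hc
      rw [div_eq_one_iff_eq h.ne'] at hc
      exact hne hc.symm
    have h1 := Real.log_lt_sub_one_of_pos (div_pos hy h) hne'
    have h4 : Real.log (x / y) = - Real.log (y / x) := by rw [← Real.log_inv, inv_div]
    have h2 := mul_lt_mul_of_pos_left h1 h
    have h3 : x * (y / x - 1) = y - x := by field_simp
    rw [h4] at he
    linarith

lemma aux_gpos {N : ℕ} [NeZero N] {α : ℝ} (hα : 1 ≤ α) {p : Fin N → ℝ} (hp : ∀ i, 0 < p i)
    (S : Finset (Fin N)) : 0 < gfun α p S := by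
  unfold gfun
  have : 0 < ∏ j ∈ S, α * p j :=
    Finset.prod_pos fun j _ => mul_pos (by linarith) (hp j)
  have := Real.rpow_pos_of_pos (hp 0) α
  positivity

lemma aux_glog {N : ℕ} [NeZero N] {α : ℝ} (hα : 1 ≤ α) {p : Fin N → ℝ} (hp : ∀ i, 0 < p i)
    (S : Finset (Fin N)) : ((S.card : ℝ) + α) * Real.log (gfun α p S)
      = α * Real.log (p 0) + ∑ j ∈ S, Real.log (α * p j) := by
  unfold gfun
  have hm : ∀ j, 0 < α * p j := fun j => mul_pos (by linarith) (hp j)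
  have h1 : 0 < ∏ j ∈ S, α * p j := Finset.prod_pos fun j _ => hm j
  have h2 := Real.rpow_pos_of_pos (hp 0) α
  have h3 : (0:ℝ) < (S.card : ℝ) + α := by positivity
  rw [Real.log_rpow (by positivity), Real.log_mul h2.ne' h1.ne', Real.log_rpow (hp 0),
    Real.log_prod (fun j _ => (hm j).ne')]
  field_simp

lemma aux_core (N : ℕ) [NeZero N] (α : ℝ) (hα : 1 ≤ α)
    (p : Fin N → ℝ) (hp : ∀ i, 0 < p i) (A : Finset (Fin N)) (h0 : (0 : Fin N) ∉ A)
    (G : ℝ) (hG : 0 < G)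
    (hlog : ((A.card : ℝ) + α) * Real.log G
      = α * Real.log (p 0) + ∑ j ∈ A, Real.log (α * p j))
    (hA : ∀ j ∈ A, G ≤ α * p j) (hnA : ∀ j, j ≠ 0 → j ∉ A → α * p j ≤ G)
    (Z : ℝ) (hZ : Z = (1 + (A.card : ℝ) / α) * G + ∑ j ∈ Finset.univ.erase 0 \ A, p j)
    (q : Fin N → ℝ)
    (hq : ∀ i, q i = if i = 0 then G / Z
      else if i ∈ A then G / (α * Z) else p i / Z) :
    q ∈ C1 N α ∧ ∀ r ∈ C1 N α, KLv q p ≤ KLv r p ∧ (KLv r p ≤ KLv q p → r = q) := by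
  have hα0 : 0 < α := by linarith
  have hZ0 : 0 < Z := by
    rw [hZ]
    have : 0 ≤ ∑ j ∈ Finset.univ.erase 0 \ A, p j := Finset.sum_nonneg fun j _ => (hp j).le
    positivity
  have hqpos : ∀ i, 0 < q i := by
    intro i
    have := hp i
    rw [hq]; split_ifs <;> positivity
  have hsub : A ⊆ Finset.univ.erase 0 := by
    intro j hj
    simp only [Finset.mem_erase, Finset.mem_univ, and_true]
    rintro rfl; exact h0 hj
  have split : ∀ f : Fin N → ℝ, ∑ i, f i
      = f 0 + (∑ j ∈ Finset.univ.erase 0 \ A, f j + ∑ j ∈ A, f j) := by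
    intro f
    rw [Finset.sum_sdiff hsub, Finset.add_sum_erase _ _ (Finset.mem_univ _)]
  have q0 : q 0 = G / Z := by rw [hq]; simp
  have qA : ∀ j ∈ A, q j = G / (α * Z) := by
    intro j hj
    rw [hq, if_neg (by rintro rfl; exact h0 hj), if_pos hj]
  have qR : ∀ j ∈ Finset.univ.erase 0 \ A, q j = p j / Z := by
    intro j hj
    simp only [Finset.mem_sdiff, Finset.mem_erase, Finset.mem_univ, and_true] at hj
    rw [hq, if_neg hj.1, if_neg hj.2]
  have hsum : ∑ i, q i = 1 := by
    rw [split, q0, Finset.sum_congr rfl qA, Finset.sum_congr rfl qR, ← Finset.sum_div,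
      Finset.sum_const, nsmul_eq_mul]
    have : ∑ j ∈ Finset.univ.erase 0 \ A, p j = Z - (1 + (A.card : ℝ) / α) * G := by
      linarith
    rw [this]; field_simp; ring
  have hqC : q ∈ C1 N α := by
    refine ⟨fun i => (hqpos i).le, hsum, fun k hk => ?_⟩
    rw [q0, hq, if_neg hk]
    split_ifs with h
    · apply le_of_eq; field_simp
    · rw [← mul_div_assoc]
      exact div_le_div_of_nonneg_right (hnA k hk h) hZ0.le
  -- the linear functional
  have l0 : Real.log (q 0 / p 0) = (Real.log G - Real.log (p 0)) - Real.log Z := by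
    rw [q0, Real.log_div (by positivity) (hp 0).ne', Real.log_div hG.ne' hZ0.ne']; ring
  have lA : ∀ j ∈ A, Real.log (q j / p j)
      = (Real.log G - Real.log (α * p j)) - Real.log Z := by
    intro j hj
    have := hp j
    rw [qA j hj, Real.log_div (by positivity) (hp j).ne', Real.log_div hG.ne' (by positivity),
      Real.log_mul hα0.ne' hZ0.ne', Real.log_mul hα0.ne' this.ne']; ring
  have lR : ∀ j ∈ Finset.univ.erase 0 \ A, Real.log (q j / p j) = - Real.log Z := by
    intro j hj
    have := hp j
    rw [qR j hj, div_right_comm, div_self this.ne', one_div, Real.log_inv]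
  have lin : ∀ r : Fin N → ℝ, ∑ i, r i = 1 → ∑ i, r i * Real.log (q i / p i)
      = r 0 * (Real.log G - Real.log (p 0))
        + ∑ j ∈ A, r j * (Real.log G - Real.log (α * p j)) - Real.log Z := by
    intro r hr
    rw [split] at hr ⊢
    have e1 : ∑ j ∈ A, r j * Real.log (q j / p j)
        = ∑ j ∈ A, r j * (Real.log G - Real.log (α * p j)) - (∑ j ∈ A, r j) * Real.log Z := by
      rw [Finset.sum_mul, ← Finset.sum_sub_distrib]
      refine Finset.sum_congr rfl fun j hj => ?_
      rw [lA j hj]; ring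
    have e2 : ∑ j ∈ Finset.univ.erase 0 \ A, r j * Real.log (q j / p j)
        = - (∑ j ∈ Finset.univ.erase 0 \ A, r j) * Real.log Z := by
      rw [neg_mul, Finset.sum_mul, ← Finset.sum_neg_distrib]
      refine Finset.sum_congr rfl fun j hj => ?_
      rw [lR j hj]; ring
    rw [e1, e2, l0]
    linear_combination (-Real.log Z) * hr
  have zero : ∀ x : ℝ, x * (Real.log G - Real.log (p 0))
      + ∑ j ∈ A, x / α * (Real.log G - Real.log (α * p j)) = 0 := by
    intro x
    rw [← Finset.mul_sum, Finset.sum_sub_distrib, Finset.sum_const, nsmul_eq_mul]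
    field_simp
    linear_combination x * hlog
  have hKq : KLv q p = - Real.log Z := by
    unfold KLv
    rw [lin q hsum]
    have := zero (q 0)
    rw [Finset.sum_congr rfl (g := fun j => q 0 / α * (Real.log G - Real.log (α * p j)))
      (fun j hj => by rw [qA j hj, q0, div_div, mul_comm Z α])]
    linarith
  refine ⟨hqC, fun r hr => ?_⟩
  obtain ⟨r0, r1, r2⟩ := hr
  have hlinr : - Real.log Z ≤ ∑ i, r i * Real.log (q i / p i) := by
    rw [lin r r1]
    have := zero (r 0)
    have h2 : ∑ j ∈ A, r 0 / α * (Real.log G - Real.log (α * p j))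
        ≤ ∑ j ∈ A, r j * (Real.log G - Real.log (α * p j)) := by
      refine Finset.sum_le_sum fun j hj => ?_
      apply mul_le_mul_of_nonpos_right
      · rw [le_div_iff₀ hα0, mul_comm]
        exact r2 j (by rintro rfl; exact h0 hj)
      · have := Real.log_le_log hG (hA j hj)
        linarith
    linarith
  have hdec : KLv r p = ∑ i, r i * Real.log (r i / q i) + ∑ i, r i * Real.log (q i / p i) := by
    unfold KLv
    rw [← Finset.sum_add_distrib]
    refine Finset.sum_congr rfl fun i _ => ?_
    rcases (r0 i).eq_or_lt with h | h
    · rw [← h]; simp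
    · rw [Real.log_div h.ne' (hp i).ne', Real.log_div h.ne' (hqpos i).ne',
        Real.log_div (hqpos i).ne' (hp i).ne']; ring
  have ht : ∀ i ∈ Finset.univ, r i - q i ≤ r i * Real.log (r i / q i) :=
    fun i _ => aux_term _ _ (r0 i) (hqpos i)
  have hs := Finset.sum_le_sum ht
  have hz : ∑ i, (r i - q i) = 0 := by rw [Finset.sum_sub_distrib, r1, hsum, sub_self]
  refine ⟨by linarith, fun hle => ?_⟩
  have heq := (Finset.sum_eq_sum_iff_of_le ht).1 (le_antisymm hs (by linarith))
  funext i
  exact aux_term_eq _ _ (r0 i) (hqpos i) (heq i (Finset.mem_univ i)).symm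

/-- Correctness of the algorithm: let `t*` be the largest `t ∈ {0, …, |B|}` such that
`g({j₁, …, j_{s-1}}) < α * p (j_s)` for every `s ∈ {1, …, t}` (with `j_s = e (s-1)` for an
enumeration `e` of `B` with `p (e 0) ≥ p (e 1) ≥ …`), let `A* = {j₁, …, j_{t*}}` and
`Z = (1 + |A*|/α) * g A* + ∑_{j ∉ A* ∪ {0}} p j`. Then the unique minimizer of (P) is
`q* 0 = g A* / Z`, `q* j = g A* / (α Z)` on `A*`, and `q* j = p j / Z` elsewhere. -/
theorem statement13 (N : ℕ) [NeZero N] (hN : 2 ≤ N) (α : ℝ) (hα : 1 ≤ α)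
    (p : Fin N → ℝ) (hp : ∀ i, 0 < p i) (hps : ∑ i, p i = 1)
    (B : Finset (Fin N)) (hB : B = Finset.univ.filter (fun j : Fin N => j ≠ 0 ∧ p 0 < α * p j))
    (e : ℕ → Fin N)
    (he_mem : ∀ s, s < B.card → e s ∈ B)
    (he_inj : ∀ s s', s < B.card → s' < B.card → e s = e s' → s = s')
    (he_surj : ∀ j ∈ B, ∃ s, s < B.card ∧ e s = j)
    (he_anti : ∀ s s', s ≤ s' → s' < B.card → p (e s') ≤ p (e s))
    (tstar : ℕ) (htstarB : tstar ≤ B.card)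
    (htstar : ∀ s, 1 ≤ s → s ≤ tstar →
      gfun α p ((Finset.range (s - 1)).image e) < α * p (e (s - 1)))
    (htstarmax : ∀ t, t ≤ B.card →
      (∀ s, 1 ≤ s → s ≤ t →
        gfun α p ((Finset.range (s - 1)).image e) < α * p (e (s - 1))) → t ≤ tstar)
    (Astar : Finset (Fin N)) (hAstar : Astar = (Finset.range tstar).image e)
    (Z : ℝ) (hZ : Z = (1 + (Astar.card : ℝ) / α) * gfun α p Astar +
      ∑ j ∈ Finset.univ.erase 0 \ Astar, p j)
    (qstar : Fin N → ℝ)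
    (hqstar : ∀ i, qstar i = if i = 0 then gfun α p Astar / Z
      else if i ∈ Astar then gfun α p Astar / (α * Z) else p i / Z) :
    (qstar ∈ C1 N α ∧ ∀ r ∈ C1 N α, KLv qstar p ≤ KLv r p) ∧
    (∀ r, r ∈ C1 N α → (∀ s ∈ C1 N α, KLv r p ≤ KLv s p) → r = qstar) := by
  have hα0 : 0 < α := by linarith
  have hm : ∀ j, 0 < α * p j := fun j => mul_pos hα0 (hp j)
  have hAB : ∀ j ∈ Astar, j ∈ B := by
    intro j hj
    rw [hAstar, Finset.mem_image] at hj
    obtain ⟨s, hs, rfl⟩ := hj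
    exact he_mem s (lt_of_lt_of_le (Finset.mem_range.1 hs) htstarB)
  have hBmem : ∀ j, j ∈ B ↔ j ≠ 0 ∧ p 0 < α * p j := by intro j; rw [hB]; simp
  have hG := aux_gpos hα hp Astar
  have hlog := aux_glog hα hp Astar
  have hc : (0 : ℝ) < (Astar.card : ℝ) + α :=
    add_pos_of_nonneg_of_pos (Nat.cast_nonneg _) hα0
  have hp0G : p 0 ≤ gfun α p Astar := by
    rw [← Real.log_le_log_iff (hp 0) hG]
    have h1 : ∑ j ∈ Astar, Real.log (p 0) ≤ ∑ j ∈ Astar, Real.log (α * p j) :=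
      Finset.sum_le_sum fun j hj =>
        Real.log_le_log (hp 0) ((hBmem j).1 (hAB j hj)).2.le
    rw [Finset.sum_const, nsmul_eq_mul] at h1
    refine le_of_mul_le_mul_left ?_ hc
    linarith
  have hA : ∀ j ∈ Astar, gfun α p Astar ≤ α * p j := by
    intro j hj
    rw [hAstar, Finset.mem_image] at hj
    obtain ⟨s, hs, rfl⟩ := hj
    rw [Finset.mem_range] at hs
    obtain ⟨t, rfl⟩ : ∃ t, tstar = t + 1 := ⟨tstar - 1, by omega⟩
    have h1 := htstar (t + 1) (by omega) le_rfl
    simp only [Nat.add_sub_cancel] at h1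
    have hnot : e t ∉ (Finset.range t).image e := by
      intro hmem
      obtain ⟨u, hu, hue⟩ := Finset.mem_image.1 hmem
      rw [Finset.mem_range] at hu
      have := he_inj u t (by omega) (by omega) hue
      omega
    have hins : Astar = insert (e t) ((Finset.range t).image e) := by
      rw [hAstar, Finset.range_add_one, Finset.image_insert]
    have hlog' := aux_glog hα hp ((Finset.range t).image e)
    rw [hins, Finset.sum_insert hnot, Finset.card_insert_of_notMem hnot, ← hins] at hlog
    rw [Nat.cast_add, Nat.cast_one] at hlog
    have h2 := Real.log_lt_log (aux_gpos hα hp _) h1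
    have hle : gfun α p Astar ≤ α * p (e t) := by
      rw [← Real.log_le_log_iff hG (hm _)]
      have hc' : (0 : ℝ) < (((Finset.range t).image e).card : ℝ) + α :=
        add_pos_of_nonneg_of_pos (Nat.cast_nonneg _) hα0
      have h3 := mul_lt_mul_of_pos_left h2 hc'
      refine le_of_mul_le_mul_left (a := (((Finset.range t).image e).card : ℝ) + 1 + α) ?_
        (by linarith)
      linarith
    exact hle.trans (mul_le_mul_of_nonneg_left (he_anti s t (by omega) (by omega)) hα0.le)
  have hnA : ∀ j, j ≠ 0 → j ∉ Astar → α * p j ≤ gfun α p Astar := by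
    intro j hj0 hj
    by_cases hjB : j ∈ B
    · obtain ⟨s, hs, rfl⟩ := he_surj j hjB
      have hts : tstar ≤ s := by
        by_contra hlt
        apply hj
        rw [hAstar]
        exact Finset.mem_image_of_mem e (Finset.mem_range.2 (by omega))
      have h1 : α * p (e tstar) ≤ gfun α p Astar := by
        by_contra hlt
        push Not at hlt
        have := htstarmax (tstar + 1) (by omega) (by
          intro s hs1 hs2
          rcases Nat.lt_or_ge tstar s with h | h
          · obtain rfl : s = tstar + 1 := by omega
            simp only [Nat.add_sub_cancel]
            rw [← hAstar]; exact hlt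
          · exact htstar s hs1 h)
        omega
      exact (mul_le_mul_of_nonneg_left (he_anti tstar s hts hs) hα0.le).trans h1
    · rw [hBmem] at hjB
      push Not at hjB
      exact (hjB hj0).trans hp0G
  have h0 : (0 : Fin N) ∉ Astar := fun h => ((hBmem 0).1 (hAB 0 h)).1 rfl
  obtain ⟨h1, h2⟩ := aux_core N α hα p hp Astar h0 _ hG hlog hA hnA Z hZ qstar hqstar
  exact ⟨⟨h1, fun r hr => (h2 r hr).1⟩, fun r hr hmin => (h2 r hr).2 (hmin qstar h1)⟩
end

section
/- Suppose the active set satisfies A = {2, …, N} (all KKT multipliers are strictly positive). Then the unique minimizer of (P) is q*_1 = α/(α + N − 1) and q*_k = 1/(α + N − 1) for every k ≠ 1. In particular, q* equals the label-smoothed one-hot label (1 − s)·e_1 + (s/N)·(1, 1, …, 1) with smoothing factor s = N/(α − 1 + N), where e_1 = (1, 0, …, 0). -/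
/-- If the active set is everything, `A = {2, …, N}` (all KKT multipliers strictly
positive), then the unique minimizer of (P) is `q* 0 = α/(α+N-1)` and
`q* k = 1/(α+N-1)` for `k ≠ 0`; i.e. `q*` is the label-smoothed one-hot label
`(1-s) • e₀ + (s/N) • (1,…,1)` with smoothing factor `s = N/(α-1+N)`. -/
theorem statement14 (N : ℕ) [NeZero N] (hN : 2 ≤ N) (α : ℝ) (hα : 1 ≤ α)
    (p : Fin N → ℝ) (hp : ∀ i, 0 < p i) (hps : ∑ i, p i = 1)
    (q : Fin N → ℝ) (hqC : q ∈ C1 N α)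
    (hqmin : ∀ r ∈ C1 N α, KLv q p ≤ KLv r p)
    (hquniq : ∀ r, r ∈ C1 N α → (∀ s ∈ C1 N α, KLv r p ≤ KLv s p) → r = q)
    (hqpos : ∀ i, 0 < q i)
    (l : ℝ) (μ : Fin N → ℝ) (hμnn : ∀ j, j ≠ 0 → 0 ≤ μ j)
    (hstat0 : q 0 = p 0 * Real.exp ((∑ k ∈ Finset.univ.erase 0, μ k) - 1 - l))
    (hstatj : ∀ j, j ≠ 0 → q j = p j * Real.exp (-(α * μ j) - 1 - l))
    (hslack : ∀ j, j ≠ 0 → μ j * (α * q j - q 0) = 0)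
    (hAfull : ∀ j, j ≠ 0 → 0 < μ j) :
    q 0 = α / (α + N - 1) ∧
    (∀ k, k ≠ 0 → q k = 1 / (α + N - 1)) ∧
    (∀ i, q i = (1 - N / (α - 1 + N)) * (if i = 0 then (1 : ℝ) else 0) +
      (N / (α - 1 + N)) / N) := by
  have hN' : (2 : ℝ) ≤ N := by exact_mod_cast hN
  have hD : 0 < α + N - 1 := by linarith
  have hα0 : α ≠ 0 := by linarith
  have hN0 : (N : ℝ) ≠ 0 := by linarith
  have hact : ∀ j, j ≠ 0 → q j = q 0 / α := by
    intro j hj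
    have h := (mul_eq_zero.mp (hslack j hj)).resolve_left (hAfull j hj).ne'
    rw [eq_div_iff hα0]
    linarith
  have hsum : ∑ i, q i = 1 := hqC.2.1
  have h0 : q 0 = α / (α + N - 1) := by
    rw [← Finset.add_sum_erase _ _ (Finset.mem_univ (0 : Fin N)),
      Finset.sum_congr rfl (fun j hj => hact j (Finset.ne_of_mem_erase hj)),
      Finset.sum_const, Finset.card_erase_of_mem (Finset.mem_univ _), Finset.card_univ,
      Fintype.card_fin, nsmul_eq_mul, Nat.cast_sub (by omega), Nat.cast_one] at hsum
    rw [eq_div_iff hD.ne']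
    field_simp at hsum
    linarith
  have hk : ∀ k, k ≠ 0 → q k = 1 / (α + N - 1) := by
    intro k hk
    rw [hact k hk, h0]
    field_simp
  refine ⟨h0, hk, ?_⟩
  have hE : α - 1 + N = α + N - 1 := by ring
  intro i
  rw [hE]
  by_cases hi : i = 0
  · subst hi
    rw [h0, if_pos rfl]
    field_simp
    ring
  · rw [hk i hi, if_neg hi]
    field_simp
    ring
end
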